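/- arXiv:1312.2226 — 2 statements merged into one kernel-verified Lean document; each statement's English description precedes it below -/
import Mathlib

section
/- There exist constants c₁, c₂ > 0 and N such that for all n ≥ N, when two functions a, b : {1, …, n} → {1, …, n} are chosen uniformly and independently at random, the probability that the resulting 2-letter n-state automaton ({1, …, n}, {a, b}) is not synchronizing lies between c₁/n and c₂/n; equivalently, the probability of being synchronizing equals 1 − Θ(1/n). -/
/-- The action of a word `w` on a state `q` in the DFA with transition function `δ`. -/
def wordAct {Q A : Type*} (δ : Q → A → Q) (q : Q) (w : List A) : Q :=
  w.foldl δ q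

/-- `w` is a reset word: it sends all states to one common state. -/
def IsResetWord {Q A : Type*} (δ : Q → A → Q) (w : List A) : Prop :=
  ∀ p q : Q, wordAct δ p w = wordAct δ q w

/-- A DFA is synchronizing if it admits a reset word. -/
def Synchronizing {Q A : Type*} (δ : Q → A → Q) : Prop :=
  ∃ w : List A, IsResetWord δ w

open scoped Classical in
/-- The probability, for a pair of transition functions `(a, b)` chosen uniformly and
independently among all maps `{1,…,n} → {1,…,n}`, that the resulting 2-letter
automaton is NOT synchronizing. -/
noncomputable def probNotSynchronizing (n : ℕ) : ℝ :=
  ((Finset.univ.filter fun fg : (Fin n → Fin n) × (Fin n → Fin n) =>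
      ¬ Synchronizing fun q x => if x = true then fg.2 q else fg.1 q).card : ℝ) /
    (Fintype.card ((Fin n → Fin n) × (Fin n → Fin n)) : ℝ)

namespace SyncProof

open Function

set_option linter.unusedSectionVars false
set_option linter.unusedDecidableInType false
set_option linter.unusedFintypeInType false

section Deterministic

variable {α : Type*} [Fintype α] [DecidableEq α]

/-- The transition function of the two-letter automaton. -/
def dl (a b : α → α) : α → Bool → α := fun q x => if x = true then b q else a q

/-- The pair `x, y` can be merged by some word. -/
def Merg (a b : α → α) (x y : α) : Prop :=
  ∃ w : List Bool, wordAct (dl a b) x w = wordAct (dl a b) y w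

lemma merg_of_eq {a b : α → α} {x y : α} (h : x = y) : Merg a b x y := ⟨[], by rw [h]⟩

lemma Merg.symm {a b : α → α} {x y : α} (h : Merg a b x y) : Merg a b y x := by
  obtain ⟨w, hw⟩ := h
  exact ⟨w, hw.symm⟩

lemma merg_a {a b : α → α} {x y : α} (h : Merg a b (a x) (a y)) : Merg a b x y := by
  obtain ⟨w, hw⟩ := h
  exact ⟨false :: w, by simpa [wordAct, dl] using hw⟩

lemma merg_b {a b : α → α} {x y : α} (h : Merg a b (b x) (b y)) : Merg a b x y := by
  obtain ⟨w, hw⟩ := h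
  exact ⟨true :: w, by simpa [wordAct, dl] using hw⟩

lemma merg_iter {a b : α → α} (i : ℕ) : ∀ {x y : α}, Merg a b (b^[i] x) (b^[i] y) → Merg a b x y := by
  induction i with
  | zero => intro x y h; simpa using h
  | succ i ih =>
    intro x y h
    exact merg_b (ih (by simpa [iterate_succ_apply] using h))

lemma wordAct_append (δ : α → Bool → α) (x : α) (u v : List Bool) :
    wordAct δ x (u ++ v) = wordAct δ (wordAct δ x u) v := by
  simp [wordAct]

lemma sync_of_merg {a b : α → α} (h : ∀ x y, Merg a b x y) : Synchronizing (dl a b) := by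
  classical
  have key : ∀ S : Finset α, ∃ w, ∀ p ∈ S, ∀ q ∈ S, wordAct (dl a b) p w = wordAct (dl a b) q w := by
    intro S
    induction S using Finset.induction_on with
    | empty => exact ⟨[], by simp⟩
    | insert x S hx ih =>
      obtain ⟨w, hw⟩ := ih
      rcases S.eq_empty_or_nonempty with rfl | ⟨y, hy⟩
      · exact ⟨[], by simp⟩
      · obtain ⟨v, hv⟩ := h (wordAct (dl a b) x w) (wordAct (dl a b) y w)
        refine ⟨w ++ v, ?_⟩
        have h1 : ∀ p ∈ insert x S, wordAct (dl a b) p (w ++ v) = wordAct (dl a b) y (w ++ v) := by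
          intro p hp
          rw [wordAct_append, wordAct_append]
          rcases Finset.mem_insert.1 hp with rfl | hp
          · exact hv
          · rw [hw p hp y hy]
        intro p hp q hq
        rw [h1 p hp, h1 q hq]
  obtain ⟨w, hw⟩ := key Finset.univ
  exact ⟨w, fun p q => hw p (Finset.mem_univ _) q (Finset.mem_univ _)⟩

/-- All states occurring in a list of pairs. -/
def flat (Q : List (α × α)) : List α := Q.flatMap fun p => [p.1, p.2]

/-- The list of the `b`-iterates of a pair. -/
def orbI (b : α → α) (I : List ℕ) (u v : α) : List (α × α) := I.map fun i => (b^[i] u, b^[i] v)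

/-- Some `h` pairs of the `b`-orbit of the pair have together `2 h` distinct states. -/
def Rich (b : α → α) (h : ℕ) (x y : α) : Prop :=
  ∃ I : List ℕ, I.length = h ∧ (flat (orbI b I x y)).Nodup

lemma flat_orbI_nodup (b : α → α) (I : List ℕ) (u v : α) (hI : I.Nodup)
    (hu : ∀ i ∈ I, ∀ j ∈ I, b^[i] u = b^[j] u → i = j)
    (hv : ∀ i ∈ I, ∀ j ∈ I, b^[i] v = b^[j] v → i = j)
    (huv : ∀ i ∈ I, ∀ j ∈ I, b^[i] u ≠ b^[j] v) : (flat (orbI b I u v)).Nodup := by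
  unfold flat orbI
  rw [List.flatMap_map, List.nodup_flatMap]
  constructor
  · intro i hi
    simpa using huv i hi i hi
  · refine List.Pairwise.imp_of_mem ?_ hI
    intro i j hi hj hij
    simp only [List.Disjoint, Function.onFun]
    intro z h1 h2
    simp only [List.mem_cons, List.not_mem_nil, or_false] at h1 h2
    rcases h1 with rfl | rfl <;> rcases h2 with h2 | h2
    · exact hij (hu i hi j hj h2)
    · exact huv i hi j hj h2
    · exact huv j hj i hi h2.symm
    · exact hij (hv i hi j hj h2)

/-- The first `h` states of the `b`-orbit of `v` are distinct and outside `V`. -/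
def Fresh (b : α → α) (h : ℕ) (V : Finset α) (v : α) : Prop :=
  (∀ i < h, b^[i] v ∉ V) ∧ (∀ i < h, ∀ j < h, b^[i] v = b^[j] v → i = j)

/-- exits of `V` under `b` -/
def exits (b : α → α) (V : Finset α) : Finset α := V.filter fun z => b z ∉ V

/-- states of `V` staying in `V` under `a` -/
def inner (a : α → α) (V : Finset α) : Finset α := V.filter fun z => a z ∈ V

/-- The bad local structure. -/
def Dense (a b : α → α) (H : ℕ) : Prop :=
  ∃ V : Finset α, V.card ≤ H ∧ (exits b V).card < (inner a V).card

/-- first states of the orbit -/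
def orb (b : α → α) (j : ℕ) (v : α) : Finset α := (Finset.range j).image fun i => b^[i] v

lemma mem_orb {b : α → α} {j : ℕ} {v z : α} : z ∈ orb b j v ↔ ∃ i < j, b^[i] v = z := by
  simp [orb]

lemma card_orb (b : α → α) (j : ℕ) (v : α) : (orb b j v).card ≤ j := by
  unfold orb
  simpa using Finset.card_image_le (s := Finset.range j) (f := fun i => b^[i] v)

lemma ext_of_not_fresh {b : α → α} {h : ℕ} {V : Finset α} {v : α} (hf : ¬ Fresh b h V v) :
    ∃ W, V ⊆ W ∧ v ∈ W ∧ W.card ≤ V.card + h ∧ exits b W ⊆ exits b V := by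
  have hex : ∃ j, j < h ∧ b^[j] v ∈ V ∪ orb b j v := by
    by_contra hcon
    push Not at hcon
    apply hf
    constructor
    · intro i hi hV
      exact hcon i hi (Finset.mem_union_left _ hV)
    · have hlt : ∀ i < h, ∀ j < h, i < j → b^[i] v ≠ b^[j] v := by
        intro i hi j hj hij he
        exact hcon j hj (Finset.mem_union_right _ (mem_orb.2 ⟨i, hij, he⟩))
      intro i hi j hj he
      rcases lt_trichotomy i j with h1 | h1 | h1
      · exact absurd he (hlt i hi j hj h1)
      · exact h1
      · exact absurd he.symm (hlt j hj i hi h1)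
  obtain ⟨j, hj, hjV⟩ := hex
  refine ⟨V ∪ orb b j v, Finset.subset_union_left, ?_, ?_, ?_⟩
  · rcases Nat.eq_zero_or_pos j with rfl | hpos
    · simpa using hjV
    · exact Finset.mem_union_right _ (mem_orb.2 ⟨0, hpos, rfl⟩)
  · exact (Finset.card_union_le _ _).trans (by have := card_orb b j v; omega)
  · intro z hz
    simp only [exits, Finset.mem_filter, Finset.mem_union, not_or] at hz ⊢
    obtain ⟨h1, h2, h3⟩ := hz
    rcases h1 with h1 | h1
    · exact ⟨h1, h2⟩
    · exfalso
      obtain ⟨i, hi, rfl⟩ := mem_orb.1 h1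
      rw [← iterate_succ_apply' b i v] at h2 h3
      rcases Nat.lt_or_ge (i + 1) j with h4 | h4
      · exact h3 (mem_orb.2 ⟨i + 1, h4, rfl⟩)
      · have : i.succ = j := by omega
        rw [this] at h2 h3
        rcases Finset.mem_union.1 hjV with h5 | h5
        · exact h2 h5
        · exact h3 h5

lemma exits_union_orb (b : α → α) (V : Finset α) (h : ℕ) (v : α) :
    (exits b (V ∪ orb b h v)).card ≤ (exits b V).card + 1 := by
  have : exits b (V ∪ orb b h v) ⊆ insert (b^[h-1] v) (exits b V) := by
    intro z hz
    simp only [exits, Finset.mem_filter, Finset.mem_union, not_or, Finset.mem_insert] at hz ⊢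
    obtain ⟨h1, h2, h3⟩ := hz
    rcases h1 with h1 | h1
    · exact Or.inr ⟨h1, h2⟩
    · left
      obtain ⟨i, hi, rfl⟩ := mem_orb.1 h1
      rw [← iterate_succ_apply' b i v] at h3
      have : i = h - 1 := by
        by_contra hne
        exact h3 (mem_orb.2 ⟨i + 1, by omega, rfl⟩)
      rw [this]
  exact (Finset.card_le_card this).trans (Finset.card_insert_le _ _)

lemma exits_cyc {b : α → α} {x : α} (hx : x ∈ periodicPts b) :
    exits b (orb b (minimalPeriod b x) x) = ∅ := by
  have hp := minimalPeriod_pos_of_mem_periodicPts hx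
  simp only [exits, Finset.filter_eq_empty_iff, not_not]
  intro z hz
  obtain ⟨i, hi, rfl⟩ := mem_orb.1 hz
  rw [← iterate_succ_apply' b i x]
  rcases Nat.lt_or_ge (i + 1) (minimalPeriod b x) with h4 | h4
  · exact mem_orb.2 ⟨i + 1, h4, rfl⟩
  · have : i.succ = minimalPeriod b x := by omega
    rw [this, iterate_minimalPeriod]
    exact mem_orb.2 ⟨0, hp, rfl⟩

lemma exits_union (b : α → α) (V W : Finset α) : exits b (V ∪ W) ⊆ exits b V ∪ exits b W := by
  intro z hz
  simp only [exits, Finset.mem_filter, Finset.mem_union, not_or] at hz ⊢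
  tauto

/-- Two fresh orbits give a rich pair. -/
lemma rich_of_fresh {b : α → α} {h : ℕ} {V W : Finset α} {u v : α} (hu : Fresh b h V u)
    (hW : orb b h u ⊆ W) (hv : Fresh b h W v) : Rich b h u v := by
  refine ⟨List.range h, by simp, flat_orbI_nodup _ _ _ _ List.nodup_range ?_ ?_ ?_⟩
  · intro i hi j hj
    exact hu.2 i (by simpa using hi) j (by simpa using hj)
  · intro i hi j hj
    exact hv.2 i (by simpa using hi) j (by simpa using hj)
  · intro i hi j hj he
    exact hv.1 j (by simpa using hj) (hW (mem_orb.2 ⟨i, by simpa using hi, he⟩))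

lemma caseA {a b : α → α} {h H : ℕ} (hH : 2 * (h * h) + 2 * h ≤ H) (hD : ¬ Dense a b H) {x y : α}
    (hxy : x ≠ y) (hx : x ∈ periodicPts b) (hy : y ∈ periodicPts b)
    (hcx : minimalPeriod b x ≤ h * h) (hcy : minimalPeriod b y ≤ h * h) :
    Rich b h (a x) (a y) := by
  set V0 := orb b (minimalPeriod b x) x ∪ orb b (minimalPeriod b y) y with hV0
  have hxV : x ∈ V0 := Finset.mem_union_left _
    (mem_orb.2 ⟨0, minimalPeriod_pos_of_mem_periodicPts hx, rfl⟩)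
  have hyV : y ∈ V0 := Finset.mem_union_right _
    (mem_orb.2 ⟨0, minimalPeriod_pos_of_mem_periodicPts hy, rfl⟩)
  have hE0 : exits b V0 = ∅ := by
    have := exits_union b (orb b (minimalPeriod b x) x) (orb b (minimalPeriod b y) y)
    rw [exits_cyc hx, exits_cyc hy] at this
    simpa using this
  have hC0 : V0.card ≤ 2 * (h * h) := by
    have h1 := card_orb b (minimalPeriod b x) x
    have h2 := card_orb b (minimalPeriod b y) y
    have := Finset.card_union_le (orb b (minimalPeriod b x) x) (orb b (minimalPeriod b y) y)
    rw [← hV0] at this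
    omega
  have hu : Fresh b h V0 (a x) := by
    by_contra hf
    obtain ⟨W, h1, h2, h3, h4⟩ := ext_of_not_fresh hf
    apply hD
    refine ⟨W, by omega, ?_⟩
    rw [hE0, Finset.subset_empty] at h4
    rw [h4, Finset.card_empty, Finset.card_pos]
    exact ⟨x, by simp [inner, h1 hxV, h2]⟩
  set V1 := V0 ∪ orb b h (a x) with hV1
  have hE1 : (exits b V1).card ≤ 1 := by
    have := exits_union_orb b V0 h (a x)
    rw [hE0] at this
    simpa using this
  have hC1 : V1.card ≤ 2 * (h * h) + h := by
    have h1 := card_orb b h (a x)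
    have := Finset.card_union_le V0 (orb b h (a x))
    rw [← hV1] at this
    omega
  by_cases hh : h = 0
  · subst hh
    exact ⟨[], rfl, by simp [flat, orbI]⟩
  have haV : a x ∈ V1 := Finset.mem_union_right _ (mem_orb.2 ⟨0, by omega, rfl⟩)
  have h01 : V0 ⊆ V1 := Finset.subset_union_left
  have hv : Fresh b h V1 (a y) := by
    by_contra hf
    obtain ⟨W, h1, h2, h3, h4⟩ := ext_of_not_fresh hf
    apply hD
    refine ⟨W, by omega, ?_⟩
    have h5 : ({x, y} : Finset α) ⊆ inner a W := by
      intro z hz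
      simp only [Finset.mem_insert, Finset.mem_singleton] at hz
      rcases hz with rfl | rfl
      · simp [inner, h1 (h01 hxV), h1 haV]
      · simp [inner, h1 (h01 hyV), h2]
    have h6 := Finset.card_le_card h5
    rw [Finset.card_pair hxy] at h6
    have := Finset.card_le_card h4
    omega
  exact rich_of_fresh hu Finset.subset_union_right hv

lemma caseB {a b : α → α} {h H : ℕ} (hH : 6 * h + 1 ≤ H) (hD : ¬ Dense a b H) {x y : α}
    (hx : x ∈ periodicPts b) (hy : y ∈ periodicPts b)
    (hcx : minimalPeriod b x < h) (hcy : minimalPeriod b x < minimalPeriod b y) :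
    Rich b h (a x) (a y) ∨
      Rich b h (a (b^[minimalPeriod b x] x)) (a (b^[minimalPeriod b x] y)) := by
  set c := minimalPeriod b x with hc
  rw [show b^[c] x = x from iterate_minimalPeriod]
  set y' := b^[c] y with hy'
  have hcpos : 0 < c := minimalPeriod_pos_of_mem_periodicPts hx
  have hyy : y ≠ y' := by
    intro he
    have := iterate_injOn_Iio_minimalPeriod (f := b) (x := y)
      (show (0 : ℕ) ∈ Set.Iio _ by simpa using hcpos.trans hcy) (show c ∈ Set.Iio _ by simpa using hcy)
      (by simpa using he)
    omega
  have hxy : x ≠ y := by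
    rintro rfl
    omega
  have hxy' : x ≠ y' := by
    intro he
    have := minimalPeriod_apply_iterate hy c
    rw [← hy', ← he] at this
    omega
  set V0 := orb b c x with hV0
  have hxV : x ∈ V0 := mem_orb.2 ⟨0, hcpos, rfl⟩
  have hE0 : exits b V0 = ∅ := exits_cyc hx
  have hC0 : V0.card ≤ h := by
    have h1 := card_orb b c x
    rw [← hV0] at h1
    omega
  have hu : Fresh b h V0 (a x) := by
    by_contra hf
    obtain ⟨W, h1, h2, h3, h4⟩ := ext_of_not_fresh hf
    apply hD
    refine ⟨W, by omega, ?_⟩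
    rw [hE0, Finset.subset_empty] at h4
    rw [h4, Finset.card_empty, Finset.card_pos]
    exact ⟨x, by simp [inner, h1 hxV, h2]⟩
  set V1 := V0 ∪ orb b h (a x) with hV1
  have hE1 : (exits b V1).card ≤ 1 := by
    have := exits_union_orb b V0 h (a x)
    rw [hE0] at this
    simpa using this
  have hC1 : V1.card ≤ 2 * h := by
    have h1 := card_orb b h (a x)
    have := Finset.card_union_le V0 (orb b h (a x))
    rw [← hV1] at this
    omega
  set V2 := V1 ∪ orb b (c + 1) y with hV2
  have hE2 : (exits b V2).card ≤ 2 := by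
    have := exits_union_orb b V1 (c + 1) y
    rw [← hV2] at this
    omega
  have hC2 : V2.card ≤ 3 * h + 1 := by
    have h1 := card_orb b (c + 1) y
    have := Finset.card_union_le V1 (orb b (c + 1) y)
    rw [← hV2] at this
    omega
  have h12 : V1 ⊆ V2 := Finset.subset_union_left
  have haV : a x ∈ V2 := h12 (Finset.mem_union_right _ (mem_orb.2 ⟨0, by omega, rfl⟩))
  have hxV2 : x ∈ V2 := h12 (Finset.mem_union_left _ hxV)
  have horb : orb b h (a x) ⊆ V2 := Finset.subset_union_right.trans h12
  have hyV2 : y ∈ V2 := Finset.mem_union_right _ (mem_orb.2 ⟨0, by omega, rfl⟩)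
  have hy'V2 : y' ∈ V2 := Finset.mem_union_right _ (mem_orb.2 ⟨c, by omega, rfl⟩)
  by_cases hv : Fresh b h V2 (a y)
  · exact Or.inl (rich_of_fresh hu horb hv)
  right
  obtain ⟨W, h1, h2, h3, h4⟩ := ext_of_not_fresh hv
  refine rich_of_fresh hu (horb.trans h1) (v := a y') (W := W) ?_
  by_contra hf
  obtain ⟨W', g1, g2, g3, g4⟩ := ext_of_not_fresh hf
  apply hD
  refine ⟨W', by omega, ?_⟩
  have h5 : ({x, y, y'} : Finset α) ⊆ inner a W' := by
    intro z hz
    simp only [Finset.mem_insert, Finset.mem_singleton] at hz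
    rcases hz with rfl | rfl | rfl
    · simp [inner, g1 (h1 hxV2), g1 (h1 haV)]
    · simp [inner, g1 (h1 hyV2), g1 h2]
    · simp [inner, g1 (h1 hy'V2), g2]
  have h6 := Finset.card_le_card h5
  rw [Finset.card_eq_three.2 ⟨x, y, y', hxy, hxy', hyy, rfl⟩] at h6
  have := Finset.card_le_card h4
  have := Finset.card_le_card g4
  omega

lemma iter_inj {b : α → α} {x : α} {i j : ℕ} (hi : i < minimalPeriod b x)
    (hj : j < minimalPeriod b x) (he : b^[i] x = b^[j] x) : i = j :=
  iterate_injOn_Iio_minimalPeriod (f := b) (x := x) (by simpa using hi) (by simpa using hj) he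

lemma rich_same {b : α → α} {h d : ℕ} {x : α} (hd0 : 0 < d) (hd : d + h ≤ minimalPeriod b x)
    (hc : h * h ≤ minimalPeriod b x) : Rich b h x (b^[d] x) := by
  by_cases hdh : d < h
  · refine ⟨(List.range h).map fun i => h * i, by simp, flat_orbI_nodup _ _ _ _ ?_ ?_ ?_ ?_⟩
    · refine (List.nodup_map_iff_inj_on List.nodup_range).2 ?_
      intro i _ j _ hij
      exact Nat.eq_of_mul_eq_mul_left (by omega) hij
    all_goals
      intro i hi j hj
      simp only [List.mem_map, List.mem_range] at hi hj
      obtain ⟨i, hi, rfl⟩ := hi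
      obtain ⟨j, hj, rfl⟩ := hj
      have h1 : h * i + h ≤ h * h := by nlinarith
      have h2 : h * j + h ≤ h * h := by nlinarith
    · intro he
      exact iter_inj (by omega) (by omega) he
    · rw [← iterate_add_apply, ← iterate_add_apply]
      intro he
      have := iter_inj (by omega) (by omega) he
      omega
    · rw [← iterate_add_apply]
      intro he
      have h3 := iter_inj (by omega) (by omega) he
      have h4 : (h * i) % h = (h * j + d) % h := by rw [h3]
      rw [Nat.mul_mod_right, Nat.mul_add_mod, Nat.mod_eq_of_lt hdh] at h4
      omega
  · refine ⟨List.range h, by simp, flat_orbI_nodup _ _ _ _ List.nodup_range ?_ ?_ ?_⟩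
    all_goals
      intro i hi j hj
      simp only [List.mem_range] at hi hj
    · intro he
      exact iter_inj (by omega) (by omega) he
    · rw [← iterate_add_apply, ← iterate_add_apply]
      intro he
      have := iter_inj (by omega) (by omega) he
      omega
    · rw [← iterate_add_apply]
      intro he
      have h3 := iter_inj (by omega) (by omega) he
      omega

lemma iterate_card_mem (b : α → α) (x : α) : b^[Fintype.card α] x ∈ periodicPts b := by
  have : ∃ i j : Fin (Fintype.card α + 1), i ≠ j ∧ b^[(i : ℕ)] x = b^[(j : ℕ)] x :=
    Fintype.exists_ne_map_eq_of_card_lt (fun i : Fin (Fintype.card α + 1) => b^[(i : ℕ)] x) (by simp)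
  obtain ⟨i, j, hij, he⟩ := this
  have key : ∀ i j : ℕ, i < j → j ≤ Fintype.card α → b^[i] x = b^[j] x →
      b^[Fintype.card α] x ∈ periodicPts b := by
    intro i j hij hj he
    have h1 : IsPeriodicPt b (j - i) (b^[Fintype.card α] x) := by
      unfold IsPeriodicPt IsFixedPt
      rw [← iterate_add_apply,
        show j - i + Fintype.card α = (Fintype.card α - i) + j by omega, iterate_add_apply, ← he,
        ← iterate_add_apply, show Fintype.card α - i + i = Fintype.card α by omega]
    exact mk_mem_periodicPts (by omega) h1
  have hi := i.2
  have hj := j.2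
  have hne : (i : ℕ) ≠ j := fun h => hij (Fin.ext h)
  rcases lt_or_gt_of_ne hne with h | h
  · exact key i j h (by omega) he
  · exact key j i h (by omega) he.symm

lemma all_merg {a b : α → α} {h H : ℕ} (hh : 2 ≤ h) (hH : 2 * (h * h) + 6 * h ≤ H)
    (hD : ¬ Dense a b H) (hR : ∀ x y, Rich b h x y → Merg a b x y) (x y : α) : Merg a b x y := by
  have hhh : 2 * h ≤ h * h := by nlinarith
  apply merg_iter (Fintype.card α)
  have hx := iterate_card_mem b x
  have hy := iterate_card_mem b y
  generalize b^[Fintype.card α] x = x at hx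
  generalize b^[Fintype.card α] y = y at hy
  by_cases hxy : x = y
  · exact merg_of_eq hxy
  by_cases hsame : ∃ d < minimalPeriod b x, b^[d] x = y
  · obtain ⟨d, hdc, rfl⟩ := hsame
    have hper := minimalPeriod_apply_iterate hx d
    by_cases hc : minimalPeriod b x ≤ h * h
    · exact merg_a (hR _ _ (caseA (by omega) hD hxy hx hy hc (by omega)))
    have hd0 : 0 < d := by
      rcases Nat.eq_zero_or_pos d with rfl | h0
      · simp at hxy
      · exact h0
    by_cases hd : d + h ≤ minimalPeriod b x
    · exact hR _ _ (rich_same hd0 hd (by omega))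
    · apply Merg.symm
      have h1 := rich_same (b := b) (x := b^[d] x) (h := h) (d := minimalPeriod b x - d)
        (by omega) (by omega) (by omega)
      rw [← iterate_add_apply, show minimalPeriod b x - d + d = minimalPeriod b x by omega,
        iterate_minimalPeriod] at h1
      exact hR _ _ h1
  · have hdiff : ∀ i j, j < minimalPeriod b y → b^[i] x ≠ b^[j] y := by
      intro i j hj he
      apply hsame
      refine ⟨(minimalPeriod b y - j + i) % minimalPeriod b x,
        Nat.mod_lt _ (minimalPeriod_pos_of_mem_periodicPts hx), ?_⟩
      rw [iterate_mod_minimalPeriod_eq, iterate_add_apply, he, ← iterate_add_apply,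
        show minimalPeriod b y - j + j = minimalPeriod b y by omega, iterate_minimalPeriod]
    by_cases h1 : h ≤ minimalPeriod b x ∧ h ≤ minimalPeriod b y
    · apply hR
      refine ⟨List.range h, by simp, flat_orbI_nodup _ _ _ _ List.nodup_range ?_ ?_ ?_⟩
      all_goals
        intro i hi j hj
        simp only [List.mem_range] at hi hj
      · intro he
        exact iter_inj (by omega) (by omega) he
      · intro he
        exact iter_inj (by omega) (by omega) he
      · exact hdiff i j (by omega)
    by_cases h2 : minimalPeriod b x ≤ h * h ∧ minimalPeriod b y ≤ h * h
    · exact merg_a (hR _ _ (caseA (by omega) hD hxy hx hy h2.1 h2.2))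
    by_cases h3 : minimalPeriod b x < h
    · rcases caseB (h := h) (H := H) (by omega) hD hx hy h3 (by omega) with h4 | h4
      · exact merg_a (hR _ _ h4)
      · exact merg_iter _ (merg_a (hR _ _ h4))
    · apply Merg.symm
      rcases caseB (h := h) (H := H) (by omega) hD hy hx (by omega) (by omega) with h4 | h4
      · exact merg_a (hR _ _ h4)
      · exact merg_iter _ (merg_a (hR _ _ h4))

end Deterministic
section Pool

open scoped Classical

variable {α : Type*} [Fintype α]

/-- The number of functions with prescribed ranges. -/
lemma card_maps (F V : Finset α) :
    ((Finset.univ.filter fun a : α → α => ∀ x ∈ F, a x ∈ V).card : ℝ) =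
      (V.card : ℝ) ^ F.card * (Fintype.card α : ℝ) ^ (Fintype.card α - F.card) := by
  have h1 : (Finset.univ.filter fun a : α → α => ∀ x ∈ F, a x ∈ V) =
      Fintype.piFinset fun x => if x ∈ F then V else Finset.univ := by
    ext a
    simp only [Finset.mem_filter, Finset.mem_univ, true_and, Fintype.mem_piFinset]
    refine forall_congr' fun x => ?_
    by_cases hx : x ∈ F <;> simp [hx]
  rw [h1, Fintype.card_piFinset]
  have h2 : ∀ x, (if x ∈ F then V else (Finset.univ : Finset α)).card =
      if x ∈ F then V.card else Fintype.card α := by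
    intro x
    split_ifs <;> simp
  simp only [h2]
  rw [Finset.prod_ite]
  simp only [Finset.prod_const]
  have h3 : (Finset.univ.filter fun x => x ∈ F) = F := by ext; simp
  have h4 : (Finset.univ.filter fun x => x ∉ F) = Fᶜ := by ext; simp
  rw [h3, h4, Finset.card_compl]
  push_cast
  ring

lemma card_agree (R : Finset α) (f : α → α) :
    (Finset.univ.filter fun a : α → α => ∀ x ∈ R, a x = f x).card =
      Fintype.card α ^ (Fintype.card α - R.card) := by
  have h1 : (Finset.univ.filter fun a : α → α => ∀ x ∈ R, a x = f x) =
      Fintype.piFinset fun x => if x ∈ R then {f x} else Finset.univ := by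
    ext a
    simp only [Finset.mem_filter, Finset.mem_univ, true_and, Fintype.mem_piFinset]
    refine forall_congr' fun x => ?_
    by_cases hx : x ∈ R <;> simp [hx]
  rw [h1, Fintype.card_piFinset]
  have h2 : ∀ x, (if x ∈ R then {f x} else (Finset.univ : Finset α)).card =
      if x ∈ R then 1 else Fintype.card α := by
    intro x
    split_ifs <;> simp
  simp only [h2]
  rw [Finset.prod_ite]
  simp only [Finset.prod_const]
  have h4 : (Finset.univ.filter fun x => x ∉ R) = Rᶜ := by ext; simp
  rw [h4, Finset.card_compl]
  simp

/-- The pair is ripe and its orbit avoids `Z`. -/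
def Good (b : α → α) (h : ℕ) (Z : Finset α) (u v : α) : Prop :=
  (flat (orbI b (List.range h) u v)).Nodup ∧ ∀ z ∈ flat (orbI b (List.range h) u v), z ∉ Z

lemma flat_append (P Q : List (α × α)) : flat (P ++ Q) = flat P ++ flat Q := by simp [flat]

lemma flat_length (P : List (α × α)) : (flat P).length = 2 * P.length := by
  induction P with
  | nil => simp [flat]
  | cons p P ih =>
    have : flat (p :: P) = p.1 :: p.2 :: flat P := by simp [flat]
    rw [this]
    simp [ih]
    omega

theorem pool (b : α → α) (h N : ℕ) (s θ ρ : ℝ) (Zmax : ℕ)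
    (hs : ((Finset.univ.filter fun p : α × α => b^[N] p.1 ≠ b^[N] p.2).card : ℝ) ≤
      (1 - s) * (Fintype.card α : ℝ) ^ 2)
    (hs1 : s ≤ 1) (hθ : 0 ≤ θ) (hρ : ρ + θ ^ h ≤ θ)
    (hbad : ∀ Z : Finset α, Z.card ≤ Zmax →
      ((Finset.univ.filter fun p : α × α => ¬ Good b h Z p.1 p.2).card : ℝ) ≤
        ρ * (Fintype.card α : ℝ) ^ 2) :
    ∀ (T : ℕ) (Q : List (α × α)) (R : Finset α) (f : α → α), (flat Q).Nodup →
      (∀ z ∈ flat Q, z ∉ R) → R.card + 2 * Q.length + 2 * h * T ≤ Zmax →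
      ((Finset.univ.filter fun a : α → α => (∀ x ∈ R, a x = f x) ∧
        ∀ p ∈ Q, ¬ Merg a b p.1 p.2).card : ℝ) ≤
        ((1 - s) ^ T + θ ^ Q.length) * (Fintype.card α : ℝ) ^ (Fintype.card α - R.card) := by
  have h1s : 0 ≤ 1 - s := by linarith
  have triv : ∀ (Q : List (α × α)) (R : Finset α) (f : α → α),
      ((Finset.univ.filter fun a : α → α => (∀ x ∈ R, a x = f x) ∧
        ∀ p ∈ Q, ¬ Merg a b p.1 p.2).card : ℝ) ≤
        (Fintype.card α : ℝ) ^ (Fintype.card α - R.card) := by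
    intro Q R f
    have := card_agree R f
    rw [← Nat.cast_pow, ← this]
    norm_cast
    apply Finset.card_le_card
    intro a ha
    simp only [Finset.mem_filter, Finset.mem_univ, true_and] at ha ⊢
    exact ha.1
  intro T
  induction T with
  | zero =>
    intro Q R f _ _ _
    refine (triv Q R f).trans ?_
    have h1 : 0 ≤ θ ^ Q.length := pow_nonneg hθ _
    have h2 : (0 : ℝ) ≤ (Fintype.card α : ℝ) ^ (Fintype.card α - R.card) := by positivity
    simp only [pow_zero]
    nlinarith
  | succ T ih =>
    intro Q R f hnd hdis hZ
    rcases Q with _ | ⟨⟨x, y⟩, Q⟩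
    · refine (triv [] R f).trans ?_
      have h1 : 0 ≤ (1 - s) ^ (T + 1) := pow_nonneg h1s _
      have h2 : (0 : ℝ) ≤ (Fintype.card α : ℝ) ^ (Fintype.card α - R.card) := by positivity
      simp only [List.length_nil, pow_zero]
      nlinarith
    have hflat : flat ((x, y) :: Q) = x :: y :: flat Q := by simp [flat]
    rw [hflat] at hnd hdis
    simp only [List.nodup_cons, List.mem_cons, not_or] at hnd
    obtain ⟨⟨hxy, hxQ⟩, hyQ, hQ⟩ := hnd
    have hxR : x ∉ R := hdis x (by simp)
    have hyR : y ∉ R := hdis y (by simp)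
    have hQR : ∀ z ∈ flat Q, z ∉ R := fun z hz => hdis z (by simp [hz])
    set R' : Finset α := insert x (insert y R) with hR'
    have hR'c : R'.card = R.card + 2 := by
      rw [hR', Finset.card_insert_of_notMem, Finset.card_insert_of_notMem hyR]
      simp [hxy, hxR]
    have hR'n : R.card + 2 ≤ Fintype.card α := by
      rw [← hR'c]
      exact Finset.card_le_univ _
    set Z : Finset α := R' ∪ (flat Q).toFinset with hZdef
    have hZc : Z.card ≤ Zmax := by
      have h1 := Finset.card_union_le R' (flat Q).toFinset
      have h2 := List.toFinset_card_le (flat Q)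
      rw [flat_length] at h2
      rw [← hZdef] at h1
      simp only [List.length_cons] at hZ
      have : 0 ≤ 2 * h * (T + 1) := Nat.zero_le _
      omega
    set M : ℝ := (Fintype.card α : ℝ) ^ (Fintype.card α - R'.card) with hM
    have hM0 : 0 ≤ M := by positivity
    set k := Q.length with hk
    set S := Finset.univ.filter fun a : α → α => (∀ z ∈ R, a z = f z) ∧
        ∀ p ∈ (x, y) :: Q, ¬ Merg a b p.1 p.2 with hS
    have hlen : ((x, y) :: Q).length = k + 1 := by simp [hk]
    rw [hlen]
    have hsum : (S.card : ℝ) = ∑ p : α × α, ((S.filter fun a => (a x, a y) = p).card : ℝ) := by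
      rw [← Nat.cast_sum]
      congr 1
      exact Finset.card_eq_sum_card_fiberwise (fun a _ => Finset.mem_coe.2 (Finset.mem_univ _))
    have hfib : ∀ p : α × α, ((S.filter fun a => (a x, a y) = p).card : ℝ) ≤
        (((if b^[N] p.1 ≠ b^[N] p.2 then (1 : ℝ) else 0) * (1 - s) ^ T +
          (if ¬ Good b h Z p.1 p.2 then (1 : ℝ) else 0) * θ ^ k) + θ ^ (k + h)) * M := by
      rintro ⟨u, v⟩
      simp only
      have hpos : 0 ≤ (((if ¬ Good b h Z u v then (1 : ℝ) else 0) * θ ^ k) + θ ^ (k + h)) * M := by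
        apply mul_nonneg _ hM0
        have h1 : 0 ≤ θ ^ k := pow_nonneg hθ _
        have h2 : 0 ≤ θ ^ (k + h) := pow_nonneg hθ _
        split_ifs <;> nlinarith
      by_cases hm : b^[N] u = b^[N] v
      · have : (S.filter fun a => (a x, a y) = (u, v)) = ∅ := by
          rw [Finset.filter_eq_empty_iff]
          intro a ha hau
          rw [Prod.mk.injEq] at hau
          simp only [hS, Finset.mem_filter, Finset.mem_univ, true_and] at ha
          apply ha.2 (x, y) (by simp)
          apply merg_a
          simp only
          rw [hau.1, hau.2]
          exact merg_iter N (merg_of_eq hm)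
        rw [this]
        simpa [hm] using hpos
      · set f' : α → α := Function.update (Function.update f y v) x u with hf'
        have hsub : ∀ Q' : List (α × α), (∀ a ∈ S, a x = u → a y = v → ∀ p ∈ Q', ¬ Merg a b p.1 p.2) →
            ((S.filter fun a => (a x, a y) = (u, v)).card : ℝ) ≤
            ((Finset.univ.filter fun a : α → α => (∀ z ∈ R', a z = f' z) ∧
              ∀ p ∈ Q', ¬ Merg a b p.1 p.2).card : ℝ) := by
          intro Q' hQ'
          norm_cast
          apply Finset.card_le_card
          intro a ha
          rw [Finset.mem_filter, Prod.mk.injEq] at ha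
          obtain ⟨haS, hax, hay⟩ := ha
          rw [Finset.mem_filter]
          refine ⟨Finset.mem_univ _, ?_, hQ' a haS hax hay⟩
          simp only [hS, Finset.mem_filter, Finset.mem_univ, true_and] at haS
          intro z hz
          simp only [hR', Finset.mem_insert] at hz
          by_cases hzx : z = x
          · subst hzx; simp [hf', hax]
          by_cases hzy : z = y
          · subst hzy; simp [hf', hay, hzx]
          · have hzR : z ∈ R := by tauto
            simp [hf', hzx, hzy, haS.1 z hzR]
        have hdisR' : ∀ z ∈ flat Q, z ∉ R' := by
          intro z hz
          simp only [hR', Finset.mem_insert, not_or]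
          refine ⟨?_, ?_, hQR z hz⟩
          · rintro rfl; exact hxQ hz
          · rintro rfl; exact hyQ hz
        simp only [List.length_cons] at hZ
        have hmul : 2 * h * (T + 1) = 2 * h * T + 2 * h := by ring
        by_cases hg : Good b h Z u v
        · have h1 := hsub (Q ++ orbI b (List.range h) u v) (by
            intro a haS hax hay p hp
            simp only [hS, Finset.mem_filter, Finset.mem_univ, true_and] at haS
            rw [List.mem_append] at hp
            rcases hp with hp | hp
            · exact haS.2 p (by simp [hp])
            · simp only [orbI, List.mem_map] at hp
              obtain ⟨i, _, rfl⟩ := hp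
              intro hme
              apply haS.2 (x, y) (by simp)
              apply merg_a
              simp only
              rw [hax, hay]
              exact merg_iter i hme)
          have h2 := ih (Q ++ orbI b (List.range h) u v) R' f' (by
            rw [flat_append, List.nodup_append]
            refine ⟨hQ, hg.1, ?_⟩
            intro z hz w hw hzw
            subst hzw
            exact hg.2 z hw (by simp [hZdef, hz])) (by
            intro z hz
            rw [flat_append, List.mem_append] at hz
            rcases hz with hz | hz
            · exact hdisR' z hz
            · intro hzR
              exact hg.2 z hz (by simp [hZdef, hzR])) (by
            simp only [List.length_append, orbI, List.length_map, List.length_range]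
            omega)
          refine (h1.trans h2).trans ?_
          simp [hm, hg, orbI, ← hk, ← hM]
        · have h1 := hsub Q (by
            intro a haS hax hay p hp
            simp only [hS, Finset.mem_filter, Finset.mem_univ, true_and] at haS
            exact haS.2 p (by simp [hp]))
          have h2 := ih Q R' f' hQ hdisR' (by omega)
          refine (h1.trans h2).trans ?_
          rw [← hM, ← hk]
          apply mul_le_mul_of_nonneg_right _ hM0
          have h2 : 0 ≤ θ ^ (k + h) := pow_nonneg hθ _
          simp [hm, hg, h2]
    have hMn : (Fintype.card α : ℝ) ^ (Fintype.card α - R.card) = (Fintype.card α : ℝ) ^ 2 * M := by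
      rw [hM, ← pow_add, hR'c]
      congr 1
      omega
    rw [hsum, hMn]
    refine (Finset.sum_le_sum fun p _ => hfib p).trans ?_
    rw [← Finset.sum_mul, Finset.sum_add_distrib, Finset.sum_add_distrib, ← Finset.sum_mul,
      ← Finset.sum_mul]
    rw [← mul_assoc]
    apply mul_le_mul_of_nonneg_right _ hM0
    have e1 : ∑ p : α × α, (if b^[N] p.1 ≠ b^[N] p.2 then (1 : ℝ) else 0) =
        ((Finset.univ.filter fun p : α × α => b^[N] p.1 ≠ b^[N] p.2).card : ℝ) := by
      rw [Finset.sum_boole]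
    have e2 : ∑ p : α × α, (if ¬ Good b h Z p.1 p.2 then (1 : ℝ) else 0) =
        ((Finset.univ.filter fun p : α × α => ¬ Good b h Z p.1 p.2).card : ℝ) := by
      rw [Finset.sum_boole]
    have e3 : ∑ _p : α × α, θ ^ (k + h) = (Fintype.card α : ℝ) ^ 2 * θ ^ (k + h) := by
      rw [Finset.sum_const, Finset.card_univ, Fintype.card_prod]
      simp [pow_two]
    rw [e1, e2, e3]
    have b1 := mul_le_mul_of_nonneg_right hs (pow_nonneg h1s T)
    have b2 := mul_le_mul_of_nonneg_right (hbad Z hZc) (pow_nonneg hθ k)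
    have b3 : (ρ + θ ^ h) * (θ ^ k * (Fintype.card α : ℝ) ^ 2) ≤
        θ * (θ ^ k * (Fintype.card α : ℝ) ^ 2) :=
      mul_le_mul_of_nonneg_right hρ (mul_nonneg (pow_nonneg hθ k) (by positivity))
    have b4 : θ ^ (k + h) = θ ^ k * θ ^ h := pow_add _ _ _
    have b5 : (1 - s) ^ (T + 1) = (1 - s) ^ T * (1 - s) := pow_succ _ _
    have b6 : θ ^ (k + 1) = θ ^ k * θ := pow_succ _ _
    rw [b4, b5, b6]
    linarith

/-- A rich pair is very likely to be mergeable. -/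
theorem rich_fail (b : α → α) (h N T : ℕ) (s θ ρ : ℝ)
    (hs : ((Finset.univ.filter fun p : α × α => b^[N] p.1 ≠ b^[N] p.2).card : ℝ) ≤
      (1 - s) * (Fintype.card α : ℝ) ^ 2)
    (hs1 : s ≤ 1) (hθ : 0 ≤ θ) (hρ : ρ + θ ^ h ≤ θ)
    (hbad : ∀ Z : Finset α, Z.card ≤ 2 * h + 2 * h * T →
      ((Finset.univ.filter fun p : α × α => ¬ Good b h Z p.1 p.2).card : ℝ) ≤
        ρ * (Fintype.card α : ℝ) ^ 2) (x y : α) (hr : Rich b h x y) :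
    ((Finset.univ.filter fun a : α → α => ¬ Merg a b x y).card : ℝ) ≤
        ((1 - s) ^ T + θ ^ h) * (Fintype.card α : ℝ) ^ (Fintype.card α) := by
  obtain ⟨I, hI, hnd⟩ := hr
  have h1 := pool b h N s θ ρ _ hs hs1 hθ hρ hbad T (orbI b I x y) ∅ id hnd (by simp)
    (by simp [orbI, hI])
  have hl : (orbI b I x y).length = h := by simp [orbI, hI]
  rw [hl, Finset.card_empty, Nat.sub_zero] at h1
  refine le_trans ?_ h1
  norm_cast
  apply Finset.card_le_card
  intro a ha
  simp only [Finset.mem_filter, Finset.mem_univ, true_and] at ha ⊢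
  refine ⟨by simp, ?_⟩
  intro p hp
  simp only [orbI, List.mem_map] at hp
  obtain ⟨i, _, rfl⟩ := hp
  exact fun hme => ha (merg_iter i hme)

end Pool
section Count

open scoped Classical

variable {α : Type*} [Fintype α]

/-- Counting the elements with a property, as a real number. -/
noncomputable def cnt {β : Type*} [Fintype β] (P : β → Prop) : ℝ :=
  ((@Finset.filter β P (Classical.decPred P) Finset.univ).card : ℝ)

lemma cnt_eq {β : Type*} [Fintype β] (P : β → Prop) [DecidablePred P] :
    ((Finset.univ.filter P).card : ℝ) = cnt P := by
  unfold cnt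
  congr!

lemma cnt_nonneg {β : Type*} [Fintype β] (P : β → Prop) : 0 ≤ cnt P := by
  unfold cnt
  positivity

lemma cnt_exists_le {ι β : Type*} [Fintype β] (s : Finset ι) (P : ι → β → Prop) :
    cnt (fun x : β => ∃ i ∈ s, P i x) ≤ ∑ i ∈ s, cnt (fun x : β => P i x) := by
  have h : (Finset.univ.filter fun x : β => ∃ i ∈ s, P i x) ⊆
      s.biUnion fun i => Finset.univ.filter fun x : β => P i x := by
    intro x hx
    simpa using hx
  have h2 := (Finset.card_le_card h).trans Finset.card_biUnion_le
  have h3 : ((Finset.univ.filter fun x : β => ∃ i ∈ s, P i x).card : ℝ) ≤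
      ∑ i ∈ s, ((Finset.univ.filter fun x : β => P i x).card : ℝ) := by exact_mod_cast h2
  rw [cnt_eq] at h3
  refine h3.trans (le_of_eq ?_)
  exact Finset.sum_congr rfl fun i _ => cnt_eq _

lemma cnt_mono {β : Type*} [Fintype β] {P Q : β → Prop} (h : ∀ x, P x → Q x) :
    cnt P ≤ cnt Q := by
  rw [← cnt_eq, ← cnt_eq]
  exact_mod_cast Finset.card_le_card (Finset.monotone_filter_right _ fun x _ hx => h x hx)

lemma cnt_or {β : Type*} [Fintype β] (P Q : β → Prop) :
    cnt (fun x : β => P x ∨ Q x) ≤ cnt P + cnt Q := by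
  rw [← cnt_eq, ← cnt_eq, ← cnt_eq, Finset.filter_or]
  exact_mod_cast Finset.card_union_le _ _

lemma cnt_prod {β γ : Type*} [Fintype β] [Fintype γ] (P : β → Prop) (Q : γ → Prop) :
    cnt (fun x : β × γ => P x.1 ∧ Q x.2) = cnt P * cnt Q := by
  rw [← cnt_eq, ← cnt_eq, ← cnt_eq, ← Nat.cast_mul, ← Finset.card_product]
  congr 2
  ext x
  simp

lemma cnt_true (β : Type*) [Fintype β] : cnt (fun _ : β => True) = Fintype.card β := by
  rw [← cnt_eq]
  simp

lemma cnt_maps (F V : Finset α) :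
    cnt (fun a : α → α => ∀ x ∈ F, a x ∈ V) =
      (V.card : ℝ) ^ F.card * (Fintype.card α : ℝ) ^ (Fintype.card α - F.card) := by
  rw [← card_maps, cnt_eq]

/-- The number of pairs of maps with the bad local structure. -/
lemma cnt_dense (H : ℕ) (hn : 0 < Fintype.card α) :
    cnt (fun p : (α → α) × (α → α) => Dense p.1 p.2 H) ≤
      (∑ k ∈ Finset.Icc 1 H, (4 : ℝ) ^ k * (k : ℝ) ^ (k + 1)) *
        ((Fintype.card α : ℝ) ^ (2 * Fintype.card α) / Fintype.card α) := by
  set n := Fintype.card α with hndef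
  have hn' : (0 : ℝ) < n := by exact_mod_cast hn
  let P : Finset α → Finset α → Finset α → (α → α) × (α → α) → Prop := fun V E F p =>
    (∀ x ∈ F, p.1 x ∈ V) ∧ (∀ x ∈ V \ E, p.2 x ∈ V)
  have h1 : ∀ p : (α → α) × (α → α), Dense p.1 p.2 H →
      ∃ k ∈ Finset.Icc 1 H, ∃ V ∈ Finset.powersetCard k (Finset.univ : Finset α),
        ∃ E ∈ V.powerset, ∃ F ∈ V.powerset.filter fun F => F.card = E.card + 1, P V E F p := by
    rintro ⟨a, b⟩ ⟨V, hV, hlt⟩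
    obtain ⟨F, hF, hFc⟩ := Finset.exists_subset_card_eq (s := inner a V) (n := (exits b V).card + 1)
      (by simpa using hlt)
    have hiV : inner a V ⊆ V := Finset.filter_subset _ _
    refine ⟨V.card, ?_, V, ?_, exits b V, ?_, F, ?_, ?_, ?_⟩
    · simp only [Finset.mem_Icc]
      refine ⟨?_, hV⟩
      have := Finset.card_le_card (hF.trans hiV)
      omega
    · simp [Finset.mem_powersetCard]
    · simp only [Finset.mem_powerset]
      exact Finset.filter_subset _ _
    · simp only [Finset.mem_filter, Finset.mem_powerset]
      exact ⟨hF.trans hiV, hFc⟩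
    · intro x hx
      exact (Finset.mem_filter.1 (hF hx)).2
    · intro x hx
      simp only [Finset.mem_sdiff, exits, Finset.mem_filter, not_and, not_not] at hx
      exact hx.2 hx.1
  have h2 : ∀ k, ∀ V ∈ Finset.powersetCard k (Finset.univ : Finset α), ∀ E ∈ V.powerset,
      ∀ F ∈ V.powerset.filter fun F => F.card = E.card + 1,
      cnt (fun p => P V E F p) =
        (k : ℝ) ^ (k + 1) * ((n : ℝ) ^ (2 * n) / (n : ℝ) ^ (k + 1)) := by
    intro k V hV E hE F hF
    simp only [Finset.mem_filter, Finset.mem_powerset, Finset.mem_powersetCard] at hV hE hF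
    have hc := cnt_prod (fun a : α → α => ∀ x ∈ F, a x ∈ V)
      (fun b : α → α => ∀ x ∈ V \ E, b x ∈ V)
    rw [show cnt (fun p => P V E F p) = _ from hc, cnt_maps, cnt_maps,
      ← hndef, Finset.card_sdiff_of_subset hE, hV.2]
    have e1 := Finset.card_le_card hE
    have e2 : F.card ≤ n := Finset.card_le_univ F
    have e3 : V.card ≤ n := Finset.card_le_univ V
    rw [hV.2] at e1 e3
    have h3 : (k : ℝ) ^ (k + 1) = (k : ℝ) ^ F.card * (k : ℝ) ^ (k - E.card) := by
      rw [← pow_add]; congr 1; omega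
    have h4 : (n : ℝ) ^ (n - F.card) * (n : ℝ) ^ (n - (k - E.card)) * (n : ℝ) ^ (k + 1) =
        (n : ℝ) ^ (2 * n) := by
      rw [← pow_add, ← pow_add]; congr 1; omega
    rw [← h4, h3, mul_div_assoc, div_self (by positivity)]
    ring
  refine (cnt_mono h1).trans ?_
  refine (cnt_exists_le _ _).trans ?_
  rw [Finset.sum_mul]
  refine Finset.sum_le_sum fun k hk => ?_
  refine (cnt_exists_le _ _).trans ?_
  set D : ℝ := (k : ℝ) ^ (k + 1) * ((n : ℝ) ^ (2 * n) / (n : ℝ) ^ (k + 1)) with hD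
  have hD0 : 0 ≤ D := by positivity
  have h5 : ∀ V ∈ Finset.powersetCard k (Finset.univ : Finset α),
      cnt (fun p => ∃ E ∈ V.powerset,
        ∃ F ∈ V.powerset.filter fun F => F.card = E.card + 1, P V E F p) ≤
      4 ^ k * D := by
    intro V hV
    refine (cnt_exists_le _ _).trans ?_
    have h6 : ∀ E ∈ V.powerset, cnt (fun p =>
        ∃ F ∈ V.powerset.filter fun F => F.card = E.card + 1, P V E F p) ≤
        2 ^ k * D := by
      intro E hE
      refine (cnt_exists_le _ _).trans ?_
      rw [Finset.sum_congr rfl fun F hF => h2 k V hV E hE F hF, Finset.sum_const, nsmul_eq_mul]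
      refine mul_le_mul_of_nonneg_right ?_ hD0
      have := Finset.card_filter_le V.powerset fun F => F.card = E.card + 1
      rw [Finset.card_powerset, (Finset.mem_powersetCard.1 hV).2] at this
      exact_mod_cast this
    refine (Finset.sum_le_sum h6).trans ?_
    rw [Finset.sum_const, nsmul_eq_mul, Finset.card_powerset, (Finset.mem_powersetCard.1 hV).2]
    rw [show (4 : ℝ) = 2 * 2 by norm_num, mul_pow]
    push_cast
    linarith
  refine (Finset.sum_le_sum h5).trans ?_
  rw [Finset.sum_const, nsmul_eq_mul, Finset.card_powersetCard, Finset.card_univ, ← hndef]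
  have h7 : ((n.choose k : ℕ) : ℝ) ≤ (n : ℝ) ^ k := by exact_mod_cast Nat.choose_le_pow n k
  calc ((n.choose k : ℕ) : ℝ) * (4 ^ k * D) ≤ (n : ℝ) ^ k * (4 ^ k * D) := by gcongr
    _ = _ := by
      rw [hD]
      field_simp
      ring

end Count
section Cyc

open scoped Classical

variable {α : Type*} [Fintype α]

lemma cnt_eq_sum {β : Type*} [Fintype β] (P : β → Prop) :
    cnt P = ∑ x : β, if P x then (1 : ℝ) else 0 := by
  rw [← cnt_eq, Finset.sum_boole]

lemma cnt_pair {β γ : Type*} [Fintype β] [Fintype γ] (P : β → γ → Prop) :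
    cnt (fun x : β × γ => P x.1 x.2) = ∑ b : β, cnt (P b) := by
  rw [cnt_eq_sum, Fintype.sum_prod_type]
  simp only [cnt_eq_sum]

lemma cnt_mem {β : Type*} [Fintype β] (V : Finset β) : cnt (fun x => x ∈ V) = V.card := by
  rw [← cnt_eq]
  simp

lemma cnt_markov {β : Type*} [Fintype β] (f : β → ℝ) (hf : ∀ x, 0 ≤ f x) (t : ℝ) :
    cnt (fun x => t ≤ f x) * t ≤ ∑ x, f x := by
  rw [cnt_eq_sum, Finset.sum_mul]
  refine Finset.sum_le_sum fun x _ => ?_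
  split_ifs with h
  · linarith
  · simpa using hf x

/-- The first `h` states of the orbit of `u` are not distinct. -/
def Short (b : α → α) (h : ℕ) (u : α) : Prop := ∃ i < h, ∃ j < h, i < j ∧ b^[i] u = b^[j] u

lemma Short.closed {b : α → α} {h : ℕ} {u : α} (hs : Short b h u) :
    ∀ z ∈ orb b h u, b z ∈ orb b h u := by
  obtain ⟨i, hi, j, hj, hij, he⟩ := hs
  intro z hz
  rw [mem_orb] at hz ⊢
  obtain ⟨m, hm, rfl⟩ := hz
  by_cases h1 : m + 1 < h
  · exact ⟨m + 1, h1, by rw [iterate_succ_apply']⟩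
  · refine ⟨h - j + i, by omega, ?_⟩
    rw [iterate_add_apply, he, ← iterate_add_apply, ← iterate_succ_apply' b]
    congr 2
    omega

lemma cnt_short (h : ℕ) (hh : 1 ≤ h) (hn : 0 < Fintype.card α) :
    cnt (fun b : α → α => (Fintype.card α : ℝ) ≤ cnt (Short b h) ^ 2) ≤
      (∑ k ∈ Finset.Icc 1 (2 * h), (k : ℝ) ^ (k + 2)) *
        ((Fintype.card α : ℝ) ^ (Fintype.card α) / Fintype.card α) := by
  set n := Fintype.card α with hndef
  have hn' : (0 : ℝ) < n := by exact_mod_cast hn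
  have h1 := cnt_markov (fun b : α → α => cnt (Short b h) ^ 2) (fun b => by positivity) (n : ℝ)
  have h2 : ∑ b : α → α, cnt (Short b h) ^ 2 ≤
      (∑ k ∈ Finset.Icc 1 (2 * h), (k : ℝ) ^ (k + 2)) * (n : ℝ) ^ n := by
    have h3 : ∀ b : α → α, cnt (Short b h) ^ 2 =
        cnt (fun p : α × α => Short b h p.1 ∧ Short b h p.2) := by
      intro b
      rw [cnt_prod, sq]
    simp only [h3]
    rw [← cnt_pair (fun (b : α → α) (p : α × α) => Short b h p.1 ∧ Short b h p.2)]
    have h4 : ∀ x : (α → α) × (α × α), (Short x.1 h x.2.1 ∧ Short x.1 h x.2.2) →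
        ∃ k ∈ Finset.Icc 1 (2 * h), ∃ V ∈ Finset.powersetCard k (Finset.univ : Finset α),
          (∀ z ∈ V, x.1 z ∈ V) ∧ (x.2.1 ∈ V ∧ x.2.2 ∈ V) := by
      rintro ⟨b, u, v⟩ ⟨hu, hv⟩
      have hu' : u ∈ orb b h u := mem_orb.2 ⟨0, by omega, rfl⟩
      have hv' : v ∈ orb b h v := mem_orb.2 ⟨0, by omega, rfl⟩
      refine ⟨(orb b h u ∪ orb b h v).card, ?_, orb b h u ∪ orb b h v, ?_, ?_, ?_, ?_⟩
      · simp only [Finset.mem_Icc]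
        constructor
        · exact Finset.card_pos.2 ⟨u, Finset.mem_union_left _ hu'⟩
        · have := Finset.card_union_le (orb b h u) (orb b h v)
          have := card_orb b h u
          have := card_orb b h v
          omega
      · simp [Finset.mem_powersetCard]
      · intro z hz
        rcases Finset.mem_union.1 hz with hz | hz
        · exact Finset.mem_union_left _ (hu.closed z hz)
        · exact Finset.mem_union_right _ (hv.closed z hz)
      · exact Finset.mem_union_left _ hu'
      · exact Finset.mem_union_right _ hv'
    refine (cnt_mono h4).trans ?_
    refine (cnt_exists_le _ _).trans ?_
    rw [Finset.sum_mul]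
    refine Finset.sum_le_sum fun k hk => ?_
    refine (cnt_exists_le _ _).trans ?_
    have h5 : ∀ V ∈ Finset.powersetCard k (Finset.univ : Finset α),
        cnt (fun x : (α → α) × (α × α) => (∀ z ∈ V, x.1 z ∈ V) ∧ (x.2.1 ∈ V ∧ x.2.2 ∈ V)) =
        (k : ℝ) ^ (k + 2) * ((n : ℝ) ^ n / (n : ℝ) ^ k) := by
      intro V hV
      have hc := (Finset.mem_powersetCard.1 hV).2
      have hk : k ≤ n := hc ▸ Finset.card_le_univ V
      rw [cnt_prod (fun b : α → α => ∀ z ∈ V, b z ∈ V) (fun p : α × α => p.1 ∈ V ∧ p.2 ∈ V),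
        cnt_maps, cnt_prod, cnt_mem, hc, ← hndef]
      rw [pow_sub₀ _ hn'.ne' hk]
      field_simp
      ring
    rw [Finset.sum_congr rfl h5, Finset.sum_const, nsmul_eq_mul, Finset.card_powersetCard,
      Finset.card_univ, ← hndef]
    have h7 : ((n.choose k : ℕ) : ℝ) ≤ (n : ℝ) ^ k := by exact_mod_cast Nat.choose_le_pow n k
    calc ((n.choose k : ℕ) : ℝ) * ((k : ℝ) ^ (k + 2) * ((n : ℝ) ^ n / (n : ℝ) ^ k))
        ≤ (n : ℝ) ^ k * ((k : ℝ) ^ (k + 2) * ((n : ℝ) ^ n / (n : ℝ) ^ k)) := by gcongr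
      _ = _ := by field_simp
  rw [← mul_div_assoc, le_div_iff₀ hn']
  exact h1.trans h2

/-- The set of the functions with a state of large indegree is small. -/
lemma cnt_indeg (r : ℕ) (hn : 0 < Fintype.card α) :
    cnt (fun b : α → α => ∃ z, r ≤ (Finset.univ.filter fun x => b x = z).card) ≤
      (Fintype.card α : ℝ) * (Fintype.card α : ℝ) ^ (Fintype.card α) / (r.factorial : ℝ) := by
  set n := Fintype.card α with hndef
  have hn' : (0 : ℝ) < n := by exact_mod_cast hn
  have h1 : ∀ b : α → α, (∃ z, r ≤ (Finset.univ.filter fun x => b x = z).card) →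
      ∃ z ∈ (Finset.univ : Finset α), ∃ F ∈ Finset.powersetCard r (Finset.univ : Finset α),
        ∀ x ∈ F, b x ∈ ({z} : Finset α) := by
    rintro b ⟨z, hz⟩
    obtain ⟨F, hF, hFc⟩ := Finset.exists_subset_card_eq hz
    refine ⟨z, Finset.mem_univ _, F, by simp [Finset.mem_powersetCard, hFc], ?_⟩
    intro x hx
    simpa using (Finset.mem_filter.1 (hF hx)).2
  refine (cnt_mono h1).trans ((cnt_exists_le _ _).trans ?_)
  have h2 : ∀ z ∈ (Finset.univ : Finset α), cnt (fun b : α → α =>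
      ∃ F ∈ Finset.powersetCard r (Finset.univ : Finset α), ∀ x ∈ F, b x ∈ ({z} : Finset α)) ≤
      (n : ℝ) ^ n / (r.factorial : ℝ) := by
    intro z _
    refine (cnt_exists_le _ _).trans ?_
    have h3 : ∀ F ∈ Finset.powersetCard r (Finset.univ : Finset α),
        cnt (fun b : α → α => ∀ x ∈ F, b x ∈ ({z} : Finset α)) = (n : ℝ) ^ n / (n : ℝ) ^ r := by
      intro F hF
      have hc := (Finset.mem_powersetCard.1 hF).2
      have hk : r ≤ n := hc ▸ Finset.card_le_univ F
      rw [cnt_maps, hc, ← hndef, pow_sub₀ _ hn'.ne' hk]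
      simp
      field_simp
    rw [Finset.sum_congr rfl h3, Finset.sum_const, nsmul_eq_mul, Finset.card_powersetCard,
      Finset.card_univ, ← hndef]
    have h7 : ((n.choose r : ℕ) : ℝ) ≤ (n : ℝ) ^ r / (r.factorial : ℝ) := Nat.choose_le_pow_div r n
    calc ((n.choose r : ℕ) : ℝ) * ((n : ℝ) ^ n / (n : ℝ) ^ r)
        ≤ ((n : ℝ) ^ r / (r.factorial : ℝ)) * ((n : ℝ) ^ n / (n : ℝ) ^ r) := by gcongr
      _ = _ := by field_simp
  refine (Finset.sum_le_sum h2).trans ?_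
  rw [Finset.sum_const, nsmul_eq_mul, Finset.card_univ, ← hndef, mul_div_assoc]

end Cyc
section Per

open scoped Classical

variable {α : Type*} [Fintype α]

lemma cnt_perm (V : Finset α) :
    cnt (fun b : α → α => (∀ x ∈ V, b x ∈ V) ∧ Set.InjOn b V) ≤
      (V.card.factorial : ℝ) * (Fintype.card α : ℝ) ^ (Fintype.card α - V.card) := by
  rw [← cnt_eq]
  have h1 : (Finset.univ.filter fun b : α → α => (∀ x ∈ V, b x ∈ V) ∧ Set.InjOn b V).card ≤
      Fintype.card ((V ↪ V) × ({x // x ∉ V} → α)) := by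
    rw [← Fintype.card_subtype]
    refine Fintype.card_le_of_injective (fun b =>
      ((⟨fun x => ⟨b.1 x, b.2.1 x x.2⟩, fun x y hxy =>
        Subtype.ext (b.2.2 x.2 y.2 (by simpa using hxy))⟩ : V ↪ V), fun x => b.1 x.1)) ?_
    rintro ⟨b, hb⟩ ⟨c, hc⟩ h
    simp only [Prod.mk.injEq] at h
    obtain ⟨h1, h2⟩ := h
    apply Subtype.ext
    funext x
    by_cases hx : x ∈ V
    · have := DFunLike.congr_fun h1 ⟨x, hx⟩
      exact congrArg Subtype.val this
    · exact congrFun h2 ⟨x, hx⟩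
  have h2 : Fintype.card ((V ↪ V) × ({x // x ∉ V} → α)) =
      V.card.factorial * Fintype.card α ^ (Fintype.card α - V.card) := by
    rw [Fintype.card_prod, Fintype.card_embedding_eq, Fintype.card_fun, Fintype.card_subtype_compl]
    simp [Nat.descFactorial_self]
  rw [h2] at h1
  exact_mod_cast h1

lemma descFactorial_le_exp (n k : ℕ) (hn : 0 < n) :
    (n.descFactorial k : ℝ) ≤ (n : ℝ) ^ k * Real.exp (-((k : ℝ) * (k - 1) / (2 * n))) := by
  have hn' : (0 : ℝ) < n := by exact_mod_cast hn
  induction k with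
  | zero => simp
  | succ k ih =>
    rw [Nat.descFactorial_succ, Nat.cast_mul]
    have h1 : ((n - k : ℕ) : ℝ) ≤ n * Real.exp (-(k / n : ℝ)) := by
      rcases le_or_gt k n with h | h
      · rw [Nat.cast_sub h]
        have := Real.add_one_le_exp (-(k / n : ℝ))
        calc (n : ℝ) - k = n * (-(k / n : ℝ) + 1) := by field_simp; ring
          _ ≤ _ := by gcongr
      · rw [Nat.sub_eq_zero_of_le h.le]
        simp
        positivity
    calc ((n - k : ℕ) : ℝ) * (n.descFactorial k : ℝ)
        ≤ (n * Real.exp (-(k / n : ℝ))) *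
          ((n : ℝ) ^ k * Real.exp (-((k : ℝ) * (k - 1) / (2 * n)))) := by gcongr
      _ = (n : ℝ) ^ (k + 1) *
          (Real.exp (-(k / n : ℝ)) * Real.exp (-((k : ℝ) * (k - 1) / (2 * n)))) := by ring
      _ = _ := by
        rw [← Real.exp_add]
        congr 2
        push_cast
        field_simp
        ring

/-- The set of the periodic states. -/
noncomputable def per (b : α → α) : Finset α := Finset.univ.filter fun x => x ∈ periodicPts b

lemma cnt_per (m : ℕ) (hm : 1 ≤ m) (hn : 0 < Fintype.card α) :
    cnt (fun b : α → α => m ≤ (per b).card) ≤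
      (Fintype.card α : ℝ) * (Fintype.card α : ℝ) ^ (Fintype.card α) *
        Real.exp (-((m : ℝ) * (m - 1) / (2 * Fintype.card α))) := by
  set n := Fintype.card α with hndef
  have hn' : (0 : ℝ) < n := by exact_mod_cast hn
  have h1 : ∀ b : α → α, m ≤ (per b).card →
      ∃ k ∈ Finset.Icc m n, ∃ V ∈ Finset.powersetCard k (Finset.univ : Finset α),
        (∀ x ∈ V, b x ∈ V) ∧ Set.InjOn b V := by
    intro b hb
    refine ⟨(per b).card, Finset.mem_Icc.2 ⟨hb, Finset.card_le_univ _⟩, per b,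
      by simp [Finset.mem_powersetCard], ?_, ?_⟩
    · intro x hx
      simp only [per, Finset.mem_filter, Finset.mem_univ, true_and] at hx ⊢
      exact (bijOn_periodicPts b).mapsTo hx
    · have := (bijOn_periodicPts b).injOn
      simpa [per] using this
  refine (cnt_mono h1).trans ((cnt_exists_le _ _).trans ?_)
  have h2 : ∀ k ∈ Finset.Icc m n, cnt (fun b : α → α =>
      ∃ V ∈ Finset.powersetCard k (Finset.univ : Finset α),
        (∀ x ∈ V, b x ∈ V) ∧ Set.InjOn b V) ≤
      (n : ℝ) ^ n * Real.exp (-((m : ℝ) * (m - 1) / (2 * n))) := by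
    intro k hk
    rw [Finset.mem_Icc] at hk
    refine (cnt_exists_le _ _).trans ?_
    have h3 : ∀ V ∈ Finset.powersetCard k (Finset.univ : Finset α),
        cnt (fun b : α → α => (∀ x ∈ V, b x ∈ V) ∧ Set.InjOn b V) ≤
          (k.factorial : ℝ) * (n : ℝ) ^ (n - k) := by
      intro V hV
      have hc := (Finset.mem_powersetCard.1 hV).2
      have := cnt_perm V
      rwa [hc] at this
    refine (Finset.sum_le_sum h3).trans ?_
    rw [Finset.sum_const, nsmul_eq_mul, Finset.card_powersetCard, Finset.card_univ, ← hndef]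
    have h4 := descFactorial_le_exp n k hn
    rw [Nat.descFactorial_eq_factorial_mul_choose] at h4
    push_cast at h4
    have h5 : Real.exp (-((k : ℝ) * (k - 1) / (2 * n))) ≤
        Real.exp (-((m : ℝ) * (m - 1) / (2 * n))) := by
      have e1 : (m : ℝ) ≤ k := by exact_mod_cast hk.1
      have e2 : (1 : ℝ) ≤ m := by exact_mod_cast hm
      rw [Real.exp_le_exp, neg_le_neg_iff]
      gcongr
    calc ((n.choose k : ℕ) : ℝ) * ((k.factorial : ℝ) * (n : ℝ) ^ (n - k))
        = ((k.factorial : ℝ) * (n.choose k : ℝ)) * (n : ℝ) ^ (n - k) := by ring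
      _ ≤ ((n : ℝ) ^ k * Real.exp (-((m : ℝ) * (m - 1) / (2 * n)))) * (n : ℝ) ^ (n - k) := by
        refine mul_le_mul_of_nonneg_right (h4.trans ?_) (by positivity)
        exact mul_le_mul_of_nonneg_left h5 (by positivity)
      _ = ((n : ℝ) ^ k * (n : ℝ) ^ (n - k)) * Real.exp (-((m : ℝ) * (m - 1) / (2 * n))) := by ring
      _ = _ := by rw [← pow_add, Nat.add_sub_cancel' hk.2]
  refine (Finset.sum_le_sum h2).trans ?_
  rw [Finset.sum_const, nsmul_eq_mul, mul_assoc]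
  gcongr
  simp
  omega

lemma cnt_coll (f : α → α) (P : Finset α) (hf : ∀ x, f x ∈ P) :
    (Fintype.card α : ℝ) ^ 2 ≤ P.card * cnt (fun p : α × α => f p.1 = f p.2) := by
  have h1 : (Fintype.card α : ℝ) = ∑ z ∈ P, ((Finset.univ.filter fun x => f x = z).card : ℝ) := by
    have := Finset.card_eq_sum_card_fiberwise (s := (Finset.univ : Finset α)) (t := P) (f := f)
      (fun x _ => hf x)
    rw [Finset.card_univ] at this
    exact_mod_cast this
  have h2 : cnt (fun p : α × α => f p.1 = f p.2) =
      ∑ z ∈ P, ((Finset.univ.filter fun x => f x = z).card : ℝ) ^ 2 := by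
    rw [← cnt_eq]
    have := Finset.card_eq_sum_card_fiberwise
      (s := (Finset.univ.filter fun p : α × α => f p.1 = f p.2)) (t := P) (f := fun p => f p.1)
      (fun x _ => hf x.1)
    rw [this]
    push_cast
    refine Finset.sum_congr rfl fun z _ => ?_
    rw [sq, ← Nat.cast_mul, ← Finset.card_product]
    congr 2
    ext ⟨u, v⟩
    simp only [Finset.mem_filter, Finset.mem_univ, true_and, Finset.mem_product]
    constructor
    · rintro ⟨h, rfl⟩
      exact ⟨rfl, h.symm⟩
    · rintro ⟨rfl, h⟩
      exact ⟨h.symm, rfl⟩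
  rw [h2]
  have := sq_sum_le_card_mul_sum_sq (s := P) (f := fun z =>
    ((Finset.univ.filter fun x => f x = z).card : ℝ))
  rwa [← h1] at this

lemma cnt_not {β : Type*} [Fintype β] (P : β → Prop) :
    cnt (fun x => ¬ P x) = Fintype.card β - cnt P := by
  rw [← cnt_eq, ← cnt_eq, eq_sub_iff_add_eq, add_comm]
  exact_mod_cast Finset.card_filter_add_card_filter_not (s := (Finset.univ : Finset β)) P

lemma cnt_noncoll (b : α → α) (s : ℝ) (hs : s * (per b).card ≤ 1)
    (hs0 : 0 ≤ s) :
    cnt (fun p : α × α => b^[Fintype.card α] p.1 ≠ b^[Fintype.card α] p.2) ≤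
      (1 - s) * (Fintype.card α : ℝ) ^ 2 := by
  have h1 := cnt_coll (b^[Fintype.card α]) (per b)
    (fun x => by simpa [per] using iterate_card_mem b x)
  rw [cnt_not (fun p : α × α => b^[Fintype.card α] p.1 = b^[Fintype.card α] p.2)]
  have h0 := cnt_nonneg (fun p : α × α => b^[Fintype.card α] p.1 = b^[Fintype.card α] p.2)
  set c := cnt (fun p : α × α => b^[Fintype.card α] p.1 = b^[Fintype.card α] p.2)
  have h2 : s * (Fintype.card α : ℝ) ^ 2 ≤ c := by
    calc s * (Fintype.card α : ℝ) ^ 2 ≤ s * ((per b).card * c) := by gcongr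
      _ = (s * (per b).card) * c := by ring
      _ ≤ 1 * c := by gcongr
      _ = c := one_mul c
  rw [Fintype.card_prod]
  push_cast
  linarith

end Per
section BadPairs

open scoped Classical

variable {α : Type*} [Fintype α]

lemma cnt_iter (b : α → α) (Δ : ℕ) (hΔ : ∀ z, (Finset.univ.filter fun x => b x = z).card ≤ Δ)
    (Z : Finset α) (i : ℕ) :
    (Finset.univ.filter fun u => b^[i] u ∈ Z).card ≤ Δ ^ i * Z.card := by
  induction i with
  | zero =>
    simp only [pow_zero, one_mul]
    exact Finset.card_le_card fun u hu => (Finset.mem_filter.1 hu).2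
  | succ i ih =>
    have h1 : (Finset.univ.filter fun u => b^[i + 1] u ∈ Z).card ≤
        Δ * (Finset.univ.filter fun u => b^[i] u ∈ Z).card := by
      refine Finset.card_le_mul_card_image_of_maps_to (f := b) ?_ Δ ?_
      · intro u hu
        have hu2 := (Finset.mem_filter.1 (Finset.mem_coe.1 hu)).2
        exact Finset.mem_coe.2 (Finset.mem_filter.2 ⟨Finset.mem_univ _, hu2⟩)
      · intro z _
        refine le_trans (Finset.card_le_card ?_) (hΔ z)
        intro u hu
        simp only [Finset.mem_filter, Finset.mem_univ, true_and] at hu ⊢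
        exact hu.2
    calc _ ≤ Δ * (Finset.univ.filter fun u => b^[i] u ∈ Z).card := h1
      _ ≤ Δ * (Δ ^ i * Z.card) := Nat.mul_le_mul_left _ ih
      _ = _ := by ring

lemma cnt_hit (b : α → α) (Δ : ℕ) (hΔ : ∀ z, (Finset.univ.filter fun x => b x = z).card ≤ Δ)
    (h1 : 1 ≤ Δ) (Z : Finset α) (h : ℕ) :
    cnt (fun u => ∃ i ∈ Finset.range h, b^[i] u ∈ Z) ≤ h * (Δ : ℝ) ^ h * Z.card := by
  refine (cnt_exists_le _ _).trans ?_
  have h2 : ∀ i ∈ Finset.range h, cnt (fun u => b^[i] u ∈ Z) ≤ (Δ : ℝ) ^ h * Z.card := by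
    intro i hi
    rw [← cnt_eq]
    have h3 := cnt_iter b Δ hΔ Z i
    have h4 : Δ ^ i ≤ Δ ^ h := Nat.pow_le_pow_right h1 (Finset.mem_range.1 hi).le
    have h5 := h3.trans (Nat.mul_le_mul_right Z.card h4)
    exact_mod_cast h5
  refine (Finset.sum_le_sum h2).trans (le_of_eq ?_)
  rw [Finset.sum_const, nsmul_eq_mul, Finset.card_range]
  ring

lemma not_good {b : α → α} {h : ℕ} {Z : Finset α} {u v : α} (hg : ¬ Good b h Z u v) :
    ((Short b h u ∧ True) ∨ (True ∧ Short b h v)) ∨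
    (((∃ i ∈ Finset.range h, b^[i] u ∈ Z) ∧ True) ∨
      (True ∧ (∃ i ∈ Finset.range h, b^[i] v ∈ Z))) ∨
    (∃ i ∈ Finset.range h, b^[i] v ∈ orb b h u) := by
  by_contra hc
  simp only [true_and, and_true, not_or, not_exists, not_and, Finset.mem_range] at hc
  obtain ⟨⟨hu, hv⟩, ⟨hu2, hv2⟩, huv⟩ := hc
  apply hg
  have key : ∀ w, ¬ Short b h w → ∀ i ∈ List.range h, ∀ j ∈ List.range h,
      b^[i] w = b^[j] w → i = j := by
    intro w hw i hi j hj he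
    rw [List.mem_range] at hi hj
    by_contra hne
    rcases lt_or_gt_of_ne hne with hlt | hlt
    · exact hw ⟨i, hi, j, hj, hlt, he⟩
    · exact hw ⟨j, hj, i, hi, hlt, he.symm⟩
  refine ⟨flat_orbI_nodup b _ u v List.nodup_range (key u hu) (key v hv) ?_, ?_⟩
  · intro i hi j hj he
    rw [List.mem_range] at hi hj
    exact huv j hj (mem_orb.2 ⟨i, hi, he⟩)
  · intro z hz
    simp only [flat, orbI, List.mem_flatMap, List.mem_map, List.mem_range] at hz
    obtain ⟨p, ⟨i, hi, rfl⟩, hz⟩ := hz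
    simp only [List.mem_cons, List.not_mem_nil, or_false] at hz
    rcases hz with rfl | rfl
    · exact hu2 i hi
    · exact hv2 i hi

lemma cnt_not_good (b : α → α) (h Δ : ℕ)
    (hΔ : ∀ z, (Finset.univ.filter fun x => b x = z).card ≤ Δ) (h1 : 1 ≤ Δ) (Z : Finset α) :
    cnt (fun p : α × α => ¬ Good b h Z p.1 p.2) ≤
      (Fintype.card α : ℝ) * (2 * cnt (Short b h) + 2 * (h * (Δ : ℝ) ^ h * Z.card) +
        h * (Δ : ℝ) ^ h * h) := by
  refine (cnt_mono fun p hp => not_good hp).trans ?_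
  refine (cnt_or _ _).trans ?_
  have e1 := cnt_or (fun p : α × α => Short b h p.1 ∧ True) (fun p => True ∧ Short b h p.2)
  rw [cnt_prod (Short b h) (fun _ => True), cnt_prod (fun _ => True) (Short b h), cnt_true] at e1
  have e2 := cnt_or (fun p : α × α => (((∃ i ∈ Finset.range h, b^[i] p.1 ∈ Z) ∧ True) ∨
      (True ∧ (∃ i ∈ Finset.range h, b^[i] p.2 ∈ Z))))
      (fun p => ∃ i ∈ Finset.range h, b^[i] p.2 ∈ orb b h p.1)
  have e3 := cnt_or (fun p : α × α => (∃ i ∈ Finset.range h, b^[i] p.1 ∈ Z) ∧ True)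
      (fun p => True ∧ (∃ i ∈ Finset.range h, b^[i] p.2 ∈ Z))
  rw [cnt_prod (fun u => ∃ i ∈ Finset.range h, b^[i] u ∈ Z) (fun _ => True),
    cnt_prod (fun _ => True) (fun u => ∃ i ∈ Finset.range h, b^[i] u ∈ Z), cnt_true] at e3
  have e4 := cnt_hit b Δ hΔ h1 Z h
  have e5 : cnt (fun p : α × α => ∃ i ∈ Finset.range h, b^[i] p.2 ∈ orb b h p.1) ≤
      (Fintype.card α : ℝ) * (h * (Δ : ℝ) ^ h * h) := by
    rw [cnt_pair (fun u v => ∃ i ∈ Finset.range h, b^[i] v ∈ orb b h u)]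
    have h6 : ∀ u ∈ (Finset.univ : Finset α),
        cnt (fun v => ∃ i ∈ Finset.range h, b^[i] v ∈ orb b h u) ≤ h * (Δ : ℝ) ^ h * h := by
      intro u _
      refine (cnt_hit b Δ hΔ h1 _ h).trans ?_
      have : ((orb b h u).card : ℝ) ≤ h := by exact_mod_cast card_orb b h u
      gcongr
    refine (Finset.sum_le_sum h6).trans (le_of_eq ?_)
    rw [Finset.sum_const, nsmul_eq_mul, Finset.card_univ]
  have e6 : (Fintype.card α : ℝ) * cnt (fun u => ∃ i ∈ Finset.range h, b^[i] u ∈ Z) ≤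
      Fintype.card α * (h * (Δ : ℝ) ^ h * Z.card) := by gcongr
  calc _ ≤ _ := add_le_add e1 e2
    _ ≤ _ := by linarith

/-- For a nice second letter, the first letter almost surely merges all rich pairs. -/
theorem nice_fail (b : α → α) (h T Δ : ℕ) (s θ : ℝ)
    (hs0 : 0 ≤ s) (hs1 : s ≤ 1) (hθ : 0 ≤ θ) (hper : s * (per b).card ≤ 1)
    (hΔ : ∀ z, (Finset.univ.filter fun x => b x = z).card ≤ Δ) (h1 : 1 ≤ Δ) (A : ℝ)
    (hA : cnt (Short b h) ≤ A)
    (hρ : 2 * A + 2 * (h * (Δ : ℝ) ^ h * (2 * h + 2 * h * T)) + h * (Δ : ℝ) ^ h * h ≤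
      (θ - θ ^ h) * Fintype.card α) :
    cnt (fun a : α → α => ∃ p : α × α, Rich b h p.1 p.2 ∧ ¬ Merg a b p.1 p.2) ≤
      (Fintype.card α : ℝ) ^ 2 * (((1 - s) ^ T + θ ^ h) *
        (Fintype.card α : ℝ) ^ (Fintype.card α)) := by
  have hs := cnt_noncoll b s hper hs0
  rw [← cnt_eq] at hs
  have hbad : ∀ Z : Finset α, Z.card ≤ 2 * h + 2 * h * T →
      ((Finset.univ.filter fun p : α × α => ¬ Good b h Z p.1 p.2).card : ℝ) ≤
        (θ - θ ^ h) * (Fintype.card α : ℝ) ^ 2 := by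
    intro Z hZ
    rw [cnt_eq]
    refine (cnt_not_good b h Δ hΔ h1 Z).trans ?_
    have hZ' : (Z.card : ℝ) ≤ 2 * h + 2 * h * T := by exact_mod_cast hZ
    calc _ ≤ (Fintype.card α : ℝ) * (2 * A + 2 * (h * (Δ : ℝ) ^ h * (2 * h + 2 * h * T)) +
        h * (Δ : ℝ) ^ h * h) := by gcongr
      _ ≤ (Fintype.card α : ℝ) * ((θ - θ ^ h) * Fintype.card α) := by gcongr
      _ = _ := by ring
  have hrf := rich_fail b h (Fintype.card α) T s θ (θ - θ ^ h) hs hs1 hθ (by linarith) hbad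
  have h2 : ∀ a : α → α, (∃ p : α × α, Rich b h p.1 p.2 ∧ ¬ Merg a b p.1 p.2) →
      ∃ p ∈ (Finset.univ : Finset (α × α)).filter (fun p => Rich b h p.1 p.2),
        ¬ Merg a b p.1 p.2 := by
    rintro a ⟨p, hp, hm⟩
    exact ⟨p, by simpa using hp, hm⟩
  refine (cnt_mono h2).trans ((cnt_exists_le _ _).trans ?_)
  set R : ℝ := ((1 - s) ^ T + θ ^ h) * (Fintype.card α : ℝ) ^ (Fintype.card α) with hR
  have hR0 : 0 ≤ R := by
    have : 0 ≤ 1 - s := by linarith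
    positivity
  have h3 : ∀ p ∈ (Finset.univ : Finset (α × α)).filter (fun p => Rich b h p.1 p.2),
      cnt (fun a : α → α => ¬ Merg a b p.1 p.2) ≤ R := by
    intro p hp
    rw [← cnt_eq]
    exact hrf p.1 p.2 (Finset.mem_filter.1 hp).2
  refine (Finset.sum_le_sum h3).trans ?_
  rw [Finset.sum_const, nsmul_eq_mul]
  refine mul_le_mul_of_nonneg_right ?_ hR0
  have h4 := Finset.card_le_univ ((Finset.univ : Finset (α × α)).filter (fun p => Rich b h p.1 p.2))
  rw [Fintype.card_prod, ← sq] at h4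
  exact_mod_cast h4

end BadPairs
section Glue

open scoped Classical

variable {α : Type*} [Fintype α]

lemma cnt_pair_swap {β γ : Type*} [Fintype β] [Fintype γ] (P : β → γ → Prop) :
    cnt (fun x : β × γ => P x.1 x.2) = ∑ c : γ, cnt (fun b => P b c) := by
  rw [cnt_pair]
  simp only [cnt_eq_sum]
  exact Finset.sum_comm

lemma cnt_snd {β γ : Type*} [Fintype β] [Fintype γ] (Q : γ → Prop) :
    cnt (fun x : β × γ => Q x.2) = Fintype.card β * cnt Q := by
  have := cnt_prod (fun _ : β => True) Q
  rw [cnt_true] at this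
  simpa using this

/-- The upper bound with parameters. -/
theorem cnt_nonsync (h T Δ m : ℕ) (θ : ℝ) (hn : 0 < Fintype.card α) (hh : 2 ≤ h) (hm : 1 ≤ m)
    (hθ : 0 ≤ θ) (h1 : 1 ≤ Δ)
    (hρ : 2 * Real.sqrt (Fintype.card α) + 2 * (h * (Δ : ℝ) ^ h * (2 * h + 2 * h * T)) +
      h * (Δ : ℝ) ^ h * h ≤ (θ - θ ^ h) * Fintype.card α) :
    cnt (fun p : (α → α) × (α → α) => ¬ Synchronizing (dl p.1 p.2)) ≤
      (((∑ k ∈ Finset.Icc 1 (2 * (h * h) + 6 * h), (4 : ℝ) ^ k * (k : ℝ) ^ (k + 1)) +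
        ∑ k ∈ Finset.Icc 1 (2 * h), (k : ℝ) ^ (k + 2)) / Fintype.card α +
      (Fintype.card α : ℝ) / ((Δ + 1).factorial : ℝ) +
      (Fintype.card α : ℝ) * Real.exp (-((m : ℝ) * (m - 1) / (2 * Fintype.card α))) +
      (Fintype.card α : ℝ) ^ 2 * ((1 - 1 / (m : ℝ)) ^ T + θ ^ h)) *
        (Fintype.card α : ℝ) ^ (2 * Fintype.card α) := by
  set H := 2 * (h * h) + 6 * h with hH
  set n := Fintype.card α with hndef
  have hn' : (0 : ℝ) < n := by exact_mod_cast hn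
  have hm' : (1 : ℝ) ≤ m := by exact_mod_cast hm
  let B1 : (α → α) → Prop := fun b => (n : ℝ) ≤ cnt (Short b h) ^ 2
  let B2 : (α → α) → Prop := fun b => ∃ z, Δ + 1 ≤ (Finset.univ.filter fun x => b x = z).card
  let B3 : (α → α) → Prop := fun b => m ≤ (per b).card
  let R : (α → α) → (α → α) → Prop := fun a b =>
    ¬ B1 b ∧ ¬ B2 b ∧ ¬ B3 b ∧ ∃ p : α × α, Rich b h p.1 p.2 ∧ ¬ Merg a b p.1 p.2
  have h2 : ∀ p : (α → α) × (α → α), ¬ Synchronizing (dl p.1 p.2) →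
      Dense p.1 p.2 H ∨ B1 p.2 ∨ B2 p.2 ∨ B3 p.2 ∨ R p.1 p.2 := by
    intro p hp
    by_contra hc
    simp only [not_or] at hc
    obtain ⟨c1, c2, c3, c4, c5⟩ := hc
    apply hp
    apply sync_of_merg
    refine all_merg hh le_rfl c1 ?_
    intro x y hxy
    by_contra hxym
    exact c5 ⟨c2, c3, c4, (x, y), hxy, hxym⟩
  have h3 : cnt (fun p : (α → α) × (α → α) => R p.1 p.2) ≤
      (n : ℝ) ^ n * ((n : ℝ) ^ 2 * (((1 - 1 / (m : ℝ)) ^ T + θ ^ h) * (n : ℝ) ^ n)) := by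
    rw [cnt_pair_swap]
    have h4 : ∀ b ∈ (Finset.univ : Finset (α → α)), cnt (fun a => R a b) ≤
        (n : ℝ) ^ 2 * (((1 - 1 / (m : ℝ)) ^ T + θ ^ h) * (n : ℝ) ^ n) := by
      intro b _
      by_cases hb : ¬ B1 b ∧ ¬ B2 b ∧ ¬ B3 b
      · obtain ⟨hb1, hb2, hb3⟩ := hb
        refine (cnt_mono fun a ha => ha.2.2.2).trans ?_
        refine nice_fail b h T Δ (1 / m) θ (by positivity) ?_ hθ ?_ ?_ h1 (Real.sqrt n) ?_ hρ
        · rw [div_le_one (by linarith)]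
          exact hm'
        · rw [one_div, inv_mul_le_iff₀ (by linarith), mul_one]
          exact_mod_cast (not_le.1 hb3).le
        · intro z
          by_contra hz
          exact hb2 ⟨z, by omega⟩
        · exact Real.le_sqrt_of_sq_le (not_le.1 hb1).le
      · have h5 : cnt (fun a => R a b) ≤ cnt (fun _ : α → α => False) :=
          cnt_mono fun a ha => hb ⟨ha.1, ha.2.1, ha.2.2.1⟩
        have h6 : cnt (fun _ : α → α => False) = 0 := by
          rw [← cnt_eq]
          simp
        have h7 : 0 ≤ 1 - 1 / (m : ℝ) := by
          rw [sub_nonneg, div_le_one (by linarith)]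
          exact hm'
        rw [h6] at h5
        exact h5.trans (by positivity)
    refine (Finset.sum_le_sum h4).trans (le_of_eq ?_)
    rw [Finset.sum_const, nsmul_eq_mul, Finset.card_univ, Fintype.card_fun]
    push_cast
    rfl
  have hnn : (Fintype.card (α → α) : ℝ) = (n : ℝ) ^ n := by
    rw [Fintype.card_fun]
    push_cast
    rfl
  have g0 := cnt_dense (α := α) H hn
  have g1 := cnt_short (α := α) h (by omega) hn
  have g2 := cnt_indeg (α := α) (Δ + 1) hn
  have g3 := cnt_per (α := α) m hm hn
  have s1 := cnt_or (fun p : (α → α) × (α → α) => Dense p.1 p.2 H)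
    (fun p => B1 p.2 ∨ B2 p.2 ∨ B3 p.2 ∨ R p.1 p.2)
  have s2 := cnt_or (fun p : (α → α) × (α → α) => B1 p.2)
    (fun p => B2 p.2 ∨ B3 p.2 ∨ R p.1 p.2)
  have s3 := cnt_or (fun p : (α → α) × (α → α) => B2 p.2) (fun p => B3 p.2 ∨ R p.1 p.2)
  have s4 := cnt_or (fun p : (α → α) × (α → α) => B3 p.2) (fun p => R p.1 p.2)
  rw [cnt_snd, hnn] at s2 s3 s4
  have hpos : (0 : ℝ) ≤ (n : ℝ) ^ n := by positivity
  have t1 := mul_le_mul_of_nonneg_left g1 hpos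
  have t2 := mul_le_mul_of_nonneg_left g2 hpos
  have t3 := mul_le_mul_of_nonneg_left g3 hpos
  have hpow : (n : ℝ) ^ (2 * n) = (n : ℝ) ^ n * (n : ℝ) ^ n := by rw [two_mul, pow_add]
  refine (cnt_mono h2).trans ?_
  rw [← hndef] at g0 t1 t2 t3
  rw [hpow] at g0 ⊢
  have := cnt_nonneg (fun p : (α → α) × (α → α) => R p.1 p.2)
  refine le_trans (b := _ + (_ + (_ + (_ + _)))) (s1.trans (add_le_add g0 (s2.trans (add_le_add t1
    (s3.trans (add_le_add t2 (s4.trans (add_le_add t3 h3)))))))) (le_of_eq ?_)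
  ring

end Glue
section Asymp

lemma two_pow_le_factorial (k : ℕ) : 2 ^ k ≤ (k + 1).factorial := by
  induction k with
  | zero => simp
  | succ k ih =>
    rw [pow_succ, Nat.factorial_succ, mul_comm]
    exact Nat.mul_le_mul (by omega) ih

lemma eventually_log : ∃ N : ℕ, ∀ n : ℕ, N ≤ n →
    ((2 : ℝ) ^ 63 * ((Nat.log 2 n + 1 : ℕ) : ℝ) ^ 41) ^ 8 ≤ n := by
  have h1 := Real.isLittleO_pow_log_id_atTop (n := 328)
  have h2 := h1.def (c := 1 / (((2 : ℝ) ^ 63) ^ 8 * 3 ^ 328)) (by positivity)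
  have h3 := (tendsto_natCast_atTop_atTop (R := ℝ)).eventually h2
  rw [Filter.eventually_atTop] at h3
  obtain ⟨N, hN⟩ := h3
  refine ⟨max N 3, fun n hn => ?_⟩
  have hn1 := hN n (le_trans (le_max_left _ _) hn)
  have hn3 : 3 ≤ n := le_trans (le_max_right _ _) hn
  have hn3' : (3 : ℝ) ≤ n := by exact_mod_cast hn3
  have hlog1 : 1 ≤ Real.log n := by
    rw [Real.le_log_iff_exp_le (by linarith)]
    exact (Real.exp_one_lt_d9.le.trans (by norm_num)).trans hn3'
  have hL : ((Nat.log 2 n + 1 : ℕ) : ℝ) ≤ 3 * Real.log n := by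
    have e1 : 2 ^ Nat.log 2 n ≤ n := Nat.pow_log_le_self 2 (by omega)
    have e2 : ((2 : ℝ) ^ Nat.log 2 n) ≤ n := by exact_mod_cast e1
    have e3 := Real.log_le_log (by positivity) e2
    rw [Real.log_pow] at e3
    have e4 := Real.log_two_gt_d9
    have e5 : (0 : ℝ) ≤ (Nat.log 2 n : ℝ) := by positivity
    push_cast
    nlinarith
  simp only [id, Real.norm_eq_abs, abs_pow] at hn1
  rw [abs_of_nonneg (by linarith), abs_of_nonneg (by linarith)] at hn1
  calc ((2 : ℝ) ^ 63 * ((Nat.log 2 n + 1 : ℕ) : ℝ) ^ 41) ^ 8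
      ≤ ((2 : ℝ) ^ 63 * (3 * Real.log n) ^ 41) ^ 8 := by gcongr
    _ = (((2 : ℝ) ^ 63) ^ 8 * 3 ^ 328) * Real.log n ^ 328 := by
      rw [mul_pow, mul_pow, mul_pow, ← pow_mul, ← pow_mul (3 : ℝ), ← pow_mul (Real.log n)]
      rw [mul_assoc]
    _ ≤ (((2 : ℝ) ^ 63) ^ 8 * 3 ^ 328) * (1 / (((2 : ℝ) ^ 63) ^ 8 * 3 ^ 328) * n) := by gcongr
    _ = n := by rw [← mul_assoc, mul_one_div_cancel (by positivity), one_mul]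

lemma exists_root (n : ℕ) : ∃ q : ℕ, q ^ 8 ≤ n ∧ n < (q + 1) ^ 8 := by
  have hex : ∃ Q : ℕ, n < Q ^ 8 := ⟨n + 1, by
    calc n < n + 1 := by omega
      _ ≤ (n + 1) ^ 8 := Nat.le_self_pow (by norm_num) _⟩
  classical
  have h1 := Nat.find_spec hex
  have h0 : Nat.find hex ≠ 0 := by
    intro h
    rw [h] at h1
    simp at h1
  have h2 := Nat.find_min hex (m := Nat.find hex - 1) (by omega)
  refine ⟨Nat.find hex - 1, by omega, ?_⟩
  rwa [Nat.sub_add_cancel (by omega)]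

/-- The choice of the parameters. -/
lemma params : ∃ N : ℕ, ∀ n : ℕ, N ≤ n → 0 < n ∧ ∃ T Δ m : ℕ, ∃ θ : ℝ, 1 ≤ m ∧ 0 ≤ θ ∧ 1 ≤ Δ ∧
    2 * Real.sqrt n + 2 * ((40 : ℕ) * (Δ : ℝ) ^ 40 * (2 * (40 : ℕ) + 2 * (40 : ℕ) * T)) +
      (40 : ℕ) * (Δ : ℝ) ^ 40 * (40 : ℕ) ≤ (θ - θ ^ 40) * n ∧
    (n : ℝ) / ((Δ + 1).factorial : ℝ) ≤ 1 / n ∧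
    (n : ℝ) * Real.exp (-((m : ℝ) * (m - 1) / (2 * n))) ≤ 1 / n ∧
    (n : ℝ) ^ 2 * ((1 - 1 / (m : ℝ)) ^ T + θ ^ 40) ≤ 2 / n := by
  obtain ⟨N, hN⟩ := eventually_log
  refine ⟨max N 1, fun n hn => ?_⟩
  have hn0 : 0 < n := le_trans (le_max_right N 1) hn
  have hn' : (0 : ℝ) < n := by exact_mod_cast hn0
  have hL := hN n (le_trans (le_max_left _ _) hn)
  obtain ⟨q, hq1, hq2⟩ := exists_root n
  set L := Nat.log 2 n + 1 with hLdef
  have hL1 : (1 : ℝ) ≤ L := by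
    rw [hLdef]
    push_cast
    linarith [(Nat.cast_nonneg (Nat.log 2 n) : (0 : ℝ) ≤ _)]
  have hnL : (n : ℝ) ≤ 2 ^ L := by
    exact_mod_cast (Nat.lt_pow_succ_log_self (by norm_num : 1 < 2) n).le
  have hq1' : (q : ℝ) ^ 8 ≤ n := by exact_mod_cast hq1
  set Q : ℝ := (q : ℝ) + 1 with hQ
  have hq2' : (n : ℝ) ≤ Q ^ 8 := by
    rw [hQ]
    exact_mod_cast hq2.le
  have hQ0 : 0 ≤ Q := by positivity
  have key : (2 : ℝ) ^ 63 * (L : ℝ) ^ 41 ≤ Q :=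
    le_of_pow_le_pow_left₀ (by norm_num) hQ0 (hL.trans hq2')
  have hL41 : (L : ℝ) ≤ (L : ℝ) ^ 41 := le_self_pow₀ hL1 (by norm_num)
  have hLQ : (2 : ℝ) ^ 63 * L ≤ Q := le_trans (by gcongr) key
  have hQbig : (2 : ℝ) ^ 63 ≤ Q := le_trans (by nlinarith) hLQ
  have hq : Q / 2 ≤ q := by rw [hQ] at *; norm_num at hQbig; linarith
  have hqbig : (2 : ℝ) ^ 62 ≤ q := by
    refine le_trans ?_ hq
    norm_num at hQbig ⊢
    linarith
  have hq0 : (0 : ℝ) < q := by linarith [show (0 : ℝ) < 2 ^ 62 by norm_num]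
  have hmR : (((q + 1) ^ 6 : ℕ) : ℝ) = Q ^ 6 := by
    rw [hQ]
    push_cast
    rfl
  have hexpL : (n : ℝ) ≤ Real.exp L := by
    refine hnL.trans ?_
    rw [← mul_one (L : ℝ), Real.exp_nat_mul]
    have := Real.exp_one_gt_d9
    gcongr
    linarith
  have hQ1 : 1 ≤ Q := le_trans (by norm_num) hQbig
  refine ⟨hn0, 3 * ((q + 1) ^ 6) * L, 2 * L, (q + 1) ^ 6, 1 / q, Nat.one_le_pow _ _ (by omega),
    by positivity, by omega, ?_, ?_, ?_, ?_⟩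
  · have e1 : Real.sqrt n ≤ Q ^ 6 * (L : ℝ) ^ 41 := by
      rw [Real.sqrt_le_iff]
      refine ⟨by positivity, hq2'.trans ?_⟩
      calc Q ^ 8 ≤ Q ^ 12 * 1 := by
            rw [mul_one]
            exact pow_le_pow_right₀ hQ1 (by norm_num)
        _ ≤ Q ^ 12 * ((L : ℝ) ^ 41) ^ 2 := by
            gcongr
            exact one_le_pow₀ (one_le_pow₀ hL1)
        _ = _ := by ring
    have e2 : (L : ℝ) ^ 40 ≤ Q ^ 6 * (L : ℝ) ^ 41 := by
      calc (L : ℝ) ^ 40 = 1 * (L : ℝ) ^ 40 := by ring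
        _ ≤ Q ^ 6 * (L : ℝ) ^ 41 := by
          gcongr
          · exact one_le_pow₀ hQ1
          · norm_num
    have e3 : (1 / 2 : ℝ) * (1 / q) ≤ (1 / q : ℝ) - (1 / q) ^ 40 := by
      have f1 : (1 / q : ℝ) ≤ 1 / 2 := by
        rw [div_le_div_iff_of_pos_left (by norm_num) hq0 (by norm_num)]
        exact le_trans (by norm_num) hqbig
      have f2 : (1 / q : ℝ) ^ 39 ≤ 1 / 2 := by
        refine le_trans (pow_le_of_le_one (by positivity) (by linarith) (by norm_num)) f1
      have f3 : (1 / q : ℝ) ^ 40 = (1 / q) * (1 / q : ℝ) ^ 39 := by ring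
      have f4 : 0 < (1 / q : ℝ) := by positivity
      rw [f3]
      nlinarith
    have e4 : Q ^ 7 / 256 ≤ ((1 / q : ℝ) - (1 / q) ^ 40) * n := by
      calc Q ^ 7 / 256 = (1 / 2) * (Q / 2) ^ 7 := by ring
        _ ≤ (1 / 2) * (q : ℝ) ^ 7 := by gcongr
        _ = ((1 / 2 : ℝ) * (1 / q)) * (q : ℝ) ^ 8 := by field_simp
        _ ≤ ((1 / 2 : ℝ) * (1 / q)) * n := by gcongr
        _ ≤ _ := by gcongr
    refine le_trans ?_ e4
    have e5 : Q ^ 6 * (2 ^ 63 * (L : ℝ) ^ 41) ≤ Q ^ 6 * Q := by gcongr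
    have e6 : ((2 * L : ℕ) : ℝ) ^ 40 = 2 ^ 40 * (L : ℝ) ^ 40 := by
      push_cast
      rw [mul_pow]
    have e7 : ((3 * ((q + 1) ^ 6) * L : ℕ) : ℝ) = 3 * Q ^ 6 * L := by
      rw [← hmR]
      push_cast
      ring
    rw [e6, e7]
    have e8 : (L : ℝ) ^ 40 * (Q ^ 6 * L) = Q ^ 6 * (L : ℝ) ^ 41 := by ring
    set X := Q ^ 6 * (L : ℝ) ^ 41
    have e9 : 2 * Real.sqrt n + 2 * ((40 : ℕ) * (2 ^ 40 * (L : ℝ) ^ 40) *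
        (2 * (40 : ℕ) + 2 * (40 : ℕ) * (3 * Q ^ 6 * L))) +
        (40 : ℕ) * (2 ^ 40 * (L : ℝ) ^ 40) * (40 : ℕ) =
        2 * Real.sqrt n + 2 ^ 40 * (6400 + 1600) * (L : ℝ) ^ 40 +
          2 ^ 40 * 19200 * ((L : ℝ) ^ 40 * (Q ^ 6 * L)) := by
      push_cast
      ring
    rw [e9, e8]
    have e10 : (2 : ℝ) ^ 63 * X ≤ Q ^ 7 := by
      calc (2 : ℝ) ^ 63 * X = Q ^ 6 * (2 ^ 63 * (L : ℝ) ^ 41) := by simp only [X]; ring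
        _ ≤ Q ^ 6 * Q := e5
        _ = Q ^ 7 := by ring
    have e11 : 0 ≤ X := by positivity
    norm_num at e10 ⊢
    linarith
  · rw [div_le_div_iff₀ (by positivity) hn', one_mul]
    have e1 : (((2 : ℕ) ^ (2 * L) : ℕ) : ℝ) ≤ ((2 * L + 1).factorial : ℝ) := by
      exact_mod_cast two_pow_le_factorial (2 * L)
    refine le_trans ?_ e1
    push_cast
    rw [two_mul, pow_add]
    gcongr
  · rw [hmR]
    have e1 : (2 * L : ℝ) ≤ Q ^ 6 * (Q ^ 6 - 1) / (2 * n) := by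
      rw [le_div_iff₀ (by positivity)]
      have f1 : Q ^ 6 / 2 ≤ Q ^ 6 - 1 := by
        have : Q ≤ Q ^ 6 := le_self_pow₀ hQ1 (by norm_num)
        norm_num at hQbig
        linarith
      have f2 : (8 * L : ℝ) ≤ Q ^ 4 := by
        have : Q ≤ Q ^ 4 := le_self_pow₀ hQ1 (by norm_num)
        norm_num at hLQ
        linarith
      calc (2 * L : ℝ) * (2 * n) ≤ (2 * L : ℝ) * (2 * Q ^ 8) := by gcongr
        _ = (8 * L : ℝ) * (Q ^ 8 / 2) := by ring
        _ ≤ Q ^ 4 * (Q ^ 8 / 2) := by gcongr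
        _ = Q ^ 6 * (Q ^ 6 / 2) := by ring
        _ ≤ _ := by gcongr
    have e2 : Real.exp (-(Q ^ 6 * (Q ^ 6 - 1) / (2 * n))) ≤ 1 / (n : ℝ) ^ 2 := by
      calc _ ≤ Real.exp (-(2 * L : ℝ)) := by
            rw [Real.exp_le_exp]
            linarith
        _ = 1 / (Real.exp L) ^ 2 := by
          rw [Real.exp_neg, one_div, ← Real.exp_nat_mul]
          push_cast
          rfl
        _ ≤ _ := by gcongr
    calc (n : ℝ) * Real.exp (-(Q ^ 6 * (Q ^ 6 - 1) / (2 * n))) ≤ n * (1 / (n : ℝ) ^ 2) := by gcongr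
      _ = 1 / n := by field_simp
  · rw [hmR]
    have hQ6 : 0 < Q ^ 6 := by positivity
    have e1 : (1 - 1 / Q ^ 6) ^ (3 * ((q + 1) ^ 6) * L) ≤ 1 / (n : ℝ) ^ 3 := by
      have f1 : 1 - 1 / Q ^ 6 ≤ Real.exp (-(1 / Q ^ 6)) := by
        have := Real.add_one_le_exp (-(1 / Q ^ 6))
        linarith
      have f2 : 0 ≤ 1 - 1 / Q ^ 6 := by
        rw [sub_nonneg, div_le_one hQ6]
        exact one_le_pow₀ hQ1
      calc (1 - 1 / Q ^ 6) ^ (3 * ((q + 1) ^ 6) * L)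
          ≤ (Real.exp (-(1 / Q ^ 6))) ^ (3 * ((q + 1) ^ 6) * L) := by gcongr
        _ = 1 / (Real.exp L) ^ 3 := by
          rw [← Real.exp_nat_mul, ← Real.exp_nat_mul, one_div (Real.exp _), ← Real.exp_neg, Nat.cast_mul,
            Nat.cast_mul, hmR]
          congr 1
          push_cast
          field_simp
        _ ≤ _ := by gcongr
    have e2 : (1 / q : ℝ) ^ 40 ≤ 1 / (n : ℝ) ^ 3 := by
      rw [one_div_pow]
      have : (n : ℝ) ^ 3 ≤ (q : ℝ) ^ 40 := by
        calc (n : ℝ) ^ 3 ≤ (Q ^ 8) ^ 3 := by gcongr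
          _ = 2 ^ 24 * (Q / 2) ^ 24 := by ring
          _ ≤ (q : ℝ) ^ 16 * (q : ℝ) ^ 24 := by
            gcongr
            calc (2 : ℝ) ^ 24 ≤ (2 ^ 62) ^ 16 := by norm_num
              _ ≤ _ := by gcongr
          _ = _ := by ring
      gcongr
    calc (n : ℝ) ^ 2 * ((1 - 1 / Q ^ 6) ^ (3 * ((q + 1) ^ 6) * L) + (1 / q : ℝ) ^ 40)
        ≤ (n : ℝ) ^ 2 * (1 / (n : ℝ) ^ 3 + 1 / (n : ℝ) ^ 3) := by gcongr
      _ = 2 / (n : ℝ) := by field_simp; norm_num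

end Asymp
section Lower

open scoped Classical

variable {α : Type*} [Fintype α]

/-- The state `i` is an isolated fixed point. -/
def Iso (i : α) (a : α → α) : Prop := ∀ j, a j = i ↔ j = i

lemma cnt_iso (i : α) (hn : 2 ≤ Fintype.card α) :
    (Fintype.card α : ℝ) ^ (Fintype.card α) / (3 * Fintype.card α) ≤ cnt (Iso i) := by
  have h1 : (Finset.univ.filter fun a : α → α => Iso i a) =
      Fintype.piFinset fun x => if x = i then {i} else ({i} : Finset α)ᶜ := by
    ext a
    rw [Finset.mem_filter, Fintype.mem_piFinset]
    simp only [Finset.mem_univ, true_and]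
    unfold Iso
    refine forall_congr' fun x => ?_
    by_cases hx : x = i <;> simp [hx]
  have h2 : ∀ x, (if x = i then {i} else ({i} : Finset α)ᶜ).card =
      if x = i then 1 else Fintype.card α - 1 := by
    intro x
    split_ifs <;> simp [Finset.card_compl]
  have h3 : cnt (Iso i) = ((Fintype.card α - 1 : ℕ) : ℝ) ^ (Fintype.card α - 1) := by
    rw [← cnt_eq, h1, Fintype.card_piFinset]
    simp only [h2]
    rw [Finset.prod_ite]
    simp only [Finset.prod_const]
    have h4 : (Finset.univ.filter fun x => ¬ x = i) = ({i} : Finset α)ᶜ := by ext; simp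
    rw [h4, Finset.card_compl]
    simp
  rw [h3]
  obtain ⟨m, hm⟩ : ∃ m, Fintype.card α = m + 1 := ⟨Fintype.card α - 1, by omega⟩
  rw [hm] at hn ⊢
  have hm0 : (0 : ℝ) < m := by
    have : 0 < m := by omega
    exact_mod_cast this
  simp only [Nat.add_sub_cancel]
  have h5 : ((m : ℝ) + 1) ^ m ≤ 3 * (m : ℝ) ^ m := by
    have e1 : (1 : ℝ) / m + 1 ≤ Real.exp (1 / m) := Real.add_one_le_exp _
    have e2 : ((1 : ℝ) / m + 1) ^ m ≤ Real.exp 1 := by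
      calc ((1 : ℝ) / m + 1) ^ m ≤ Real.exp (1 / m) ^ m := by gcongr
        _ = Real.exp 1 := by
          rw [← Real.exp_nat_mul]
          congr 1
          field_simp
    have e3 := Real.exp_one_lt_d9
    calc ((m : ℝ) + 1) ^ m = ((1 : ℝ) / m + 1) ^ m * (m : ℝ) ^ m := by
          rw [← mul_pow]
          congr 1
          field_simp
          ring
      _ ≤ 3 * (m : ℝ) ^ m := by
        gcongr
        linarith
  rw [div_le_iff₀ (by positivity)]
  push_cast
  rw [pow_succ]
  nlinarith [show (0 : ℝ) < m + 1 by linarith]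

lemma cnt_iso_two (i j : α) (hij : i ≠ j) (hn : 2 ≤ Fintype.card α) :
    cnt (fun a : α → α => Iso i a ∧ Iso j a) ≤
      (Fintype.card α : ℝ) ^ (Fintype.card α) / (Fintype.card α : ℝ) ^ 2 := by
  have h1 := card_agree ({i, j} : Finset α) id
  rw [Finset.card_pair hij] at h1
  have hn' : (0 : ℝ) < Fintype.card α := by
    have : 0 < Fintype.card α := by omega
    exact_mod_cast this
  calc cnt (fun a : α → α => Iso i a ∧ Iso j a)
      ≤ cnt (fun a : α → α => ∀ x ∈ ({i, j} : Finset α), a x = id x) := by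
        refine cnt_mono ?_
        rintro a ⟨hi, hj⟩ x hx
        simp only [Finset.mem_insert, Finset.mem_singleton] at hx
        rcases hx with rfl | rfl
        · exact (hi x).2 rfl
        · exact (hj x).2 rfl
    _ = (Fintype.card α : ℝ) ^ (Fintype.card α - 2) := by
        rw [← cnt_eq, h1]
        push_cast
        rfl
    _ = _ := by
        rw [pow_sub₀ _ hn'.ne' hn]
        rfl

lemma iso_not_sync (i : α) (a b : α → α) (ha : Iso i a) (hb : Iso i b)
    (hn : 2 ≤ Fintype.card α) : ¬ Synchronizing (dl a b) := by
  rintro ⟨w, hw⟩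
  have h1 : ∀ (w : List Bool) (q : α), wordAct (dl a b) q w = i ↔ q = i := by
    intro w
    induction w with
    | nil =>
      intro q
      simp [wordAct]
    | cons x w ih =>
      intro q
      have h2 : wordAct (dl a b) q (x :: w) = wordAct (dl a b) (dl a b q x) w := rfl
      rw [h2, ih]
      unfold dl
      split_ifs
      · exact hb q
      · exact ha q
  have : Nontrivial α := Fintype.one_lt_card_iff_nontrivial.1 (by omega)
  obtain ⟨j, hj⟩ := exists_ne i
  apply hj
  rw [← h1 w j, hw j i, h1]

lemma cnt_lower (hn : 18 ≤ Fintype.card α) :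
    (Fintype.card α : ℝ) ^ (2 * Fintype.card α) / (18 * Fintype.card α) ≤
      cnt (fun p : (α → α) × (α → α) => ¬ Synchronizing (dl p.1 p.2)) := by
  set n := Fintype.card α with hndef
  have hn18 : (18 : ℝ) ≤ n := by exact_mod_cast hn
  have hn' : (0 : ℝ) < n := by linarith
  let E : α → (α → α) × (α → α) → Prop := fun i p => Iso i p.1 ∧ Iso i p.2
  let G : α → (α → α) × (α → α) → Prop := fun i p => E i p ∧ ∀ j, j ≠ i → ¬ E j p
  have hpow : (n : ℝ) ^ (2 * n) = (n : ℝ) ^ n * (n : ℝ) ^ n := by rw [two_mul, pow_add]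
  have h1 : ∀ i, (n : ℝ) ^ (2 * n) / (18 * (n : ℝ) ^ 2) ≤ cnt (G i) := by
    intro i
    have e1 : (n : ℝ) ^ (2 * n) / (9 * (n : ℝ) ^ 2) ≤ cnt (E i) := by
      have e2 : cnt (E i) = cnt (Iso i) * cnt (Iso i) := cnt_prod (Iso i) (Iso i)
      have e3 := cnt_iso i (by omega)
      rw [e2, hpow]
      calc (n : ℝ) ^ n * (n : ℝ) ^ n / (9 * (n : ℝ) ^ 2) =
          ((n : ℝ) ^ n / (3 * n)) * ((n : ℝ) ^ n / (3 * n)) := by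
            field_simp
            norm_num
        _ ≤ _ := mul_le_mul e3 e3 (by positivity) (cnt_nonneg _)
    have e4 : cnt (E i) ≤ cnt (G i) + cnt (fun p => ∃ j ∈ Finset.univ.erase i, E i p ∧ E j p) := by
      refine le_trans (cnt_mono ?_) (cnt_or _ _)
      intro p hp
      by_cases hc : ∀ j, j ≠ i → ¬ E j p
      · exact Or.inl ⟨hp, hc⟩
      · push Not at hc
        obtain ⟨j, hj, hjE⟩ := hc
        exact Or.inr ⟨j, by simpa using hj, hp, hjE⟩
    have e5 : cnt (fun p => ∃ j ∈ Finset.univ.erase i, E i p ∧ E j p) ≤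
        n * ((n : ℝ) ^ (2 * n) / (n : ℝ) ^ 4) := by
      refine (cnt_exists_le _ _).trans ?_
      have e6 : ∀ j ∈ Finset.univ.erase i, cnt (fun p => E i p ∧ E j p) ≤
          (n : ℝ) ^ (2 * n) / (n : ℝ) ^ 4 := by
        intro j hj
        have hji : i ≠ j := (Finset.ne_of_mem_erase hj).symm
        have e7 := cnt_iso_two i j hji (by omega)
        have e8 : cnt (fun p => E i p ∧ E j p) ≤ cnt (fun a : α → α => Iso i a ∧ Iso j a) *
            cnt (fun a : α → α => Iso i a ∧ Iso j a) := by
          rw [← cnt_prod (fun a : α → α => Iso i a ∧ Iso j a)]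
          refine cnt_mono ?_
          rintro p ⟨⟨p1, p2⟩, p3, p4⟩
          exact ⟨⟨p1, p3⟩, p2, p4⟩
        have e9 := cnt_nonneg (fun a : α → α => Iso i a ∧ Iso j a)
        calc _ ≤ _ := e8
          _ ≤ ((n : ℝ) ^ n / (n : ℝ) ^ 2) * ((n : ℝ) ^ n / (n : ℝ) ^ 2) := by gcongr
          _ = _ := by
            rw [hpow]
            field_simp
      refine (Finset.sum_le_sum e6).trans ?_
      rw [Finset.sum_const, nsmul_eq_mul]
      refine mul_le_mul_of_nonneg_right ?_ (by positivity)
      exact_mod_cast Finset.card_le_univ (Finset.univ.erase i)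
    have e10 : (n : ℝ) ^ (2 * n) / (18 * (n : ℝ) ^ 2) + n * ((n : ℝ) ^ (2 * n) / (n : ℝ) ^ 4) ≤
        (n : ℝ) ^ (2 * n) / (9 * (n : ℝ) ^ 2) := by
      have f1 : n * ((n : ℝ) ^ (2 * n) / (n : ℝ) ^ 4) =
          (n : ℝ) ^ (2 * n) / (18 * (n : ℝ) ^ 2) * (18 / n) := by
        field_simp
      have f2 : (n : ℝ) ^ (2 * n) / (9 * (n : ℝ) ^ 2) =
          (n : ℝ) ^ (2 * n) / (18 * (n : ℝ) ^ 2) * 2 := by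
        field_simp
        norm_num
      have f3 : (18 : ℝ) / n ≤ 1 := by
        rw [div_le_one hn']
        exact hn18
      have f4 : 0 ≤ (n : ℝ) ^ (2 * n) / (18 * (n : ℝ) ^ 2) := by positivity
      rw [f1, f2]
      nlinarith
    linarith
  have h2 : ∑ i : α, cnt (G i) ≤
      cnt (fun p : (α → α) × (α → α) => ¬ Synchronizing (dl p.1 p.2)) := by
    rw [← cnt_pair, cnt_pair_swap, cnt_eq_sum (fun p : (α → α) × (α → α) => _)]
    refine Finset.sum_le_sum fun p _ => ?_
    rw [← cnt_eq]
    split_ifs with hp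
    · have : (Finset.univ.filter fun i => G i p) = ∅ := by
        rw [Finset.filter_eq_empty_iff]
        intro i _ hG
        exact iso_not_sync i p.1 p.2 hG.1.1 hG.1.2 (by omega) hp
      rw [this]
      simp
    · have : (Finset.univ.filter fun i => G i p).card ≤ 1 := by
        rw [Finset.card_le_one]
        intro i hi j hj
        by_contra hij
        exact (Finset.mem_filter.1 hi).2.2 j (Ne.symm hij) (Finset.mem_filter.1 hj).2.1
      exact_mod_cast this
  refine le_trans ?_ h2
  refine le_trans (le_of_eq ?_) (Finset.sum_le_sum fun i _ => h1 i)
  rw [Finset.sum_const, nsmul_eq_mul, Finset.card_univ, ← hndef]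
  field_simp

end Lower
/-- The parameters, with the orbit length hidden. -/
lemma params_exists : ∃ h : ℕ, 2 ≤ h ∧ ∃ N : ℕ, ∀ n : ℕ, N ≤ n →
    0 < n ∧ ∃ T Δ m : ℕ, ∃ θ : ℝ, 1 ≤ m ∧ 0 ≤ θ ∧ 1 ≤ Δ ∧
    2 * Real.sqrt n + 2 * ((h : ℕ) * (Δ : ℝ) ^ h * (2 * (h : ℕ) + 2 * (h : ℕ) * T)) +
      (h : ℕ) * (Δ : ℝ) ^ h * (h : ℕ) ≤ (θ - θ ^ h) * n ∧
    (n : ℝ) / ((Δ + 1).factorial : ℝ) ≤ 1 / n ∧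
    (n : ℝ) * Real.exp (-((m : ℝ) * (m - 1) / (2 * n))) ≤ 1 / n ∧
    (n : ℝ) ^ 2 * ((1 - 1 / (m : ℝ)) ^ T + θ ^ h) ≤ 2 / n :=
  ⟨40, by norm_num, params⟩

section Final

open scoped Classical

/-- The number of non-synchronizing automata. -/
noncomputable def nons (α : Type*) [Fintype α] : ℝ :=
  cnt (fun p : (α → α) × (α → α) => ¬ Synchronizing (dl p.1 p.2))

lemma cnt_inst {β : Type*} (i1 i2 : Fintype β) (P : β → Prop) : @cnt β i1 P = @cnt β i2 P := by
  rw [Subsingleton.elim i1 i2]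

end Final

lemma prob_eq (n : ℕ) : probNotSynchronizing n = nons (Fin n) / (n : ℝ) ^ (2 * n) := by
  unfold probNotSynchronizing nons
  rw [cnt_eq]
  congr 1
  · exact cnt_inst _ _ _
  · rw [Fintype.card_prod, Fintype.card_fun, Fintype.card_fin, two_mul, pow_add]
    push_cast
    rfl

end SyncProof

/-- The probability that a uniformly random 2-letter `n`-state automaton is not
synchronizing is `Θ(1/n)`; equivalently, the probability of being synchronizing
is `1 − Θ(1/n)`. -/
theorem probNotSynchronizing_theta_one_div_n :
    ∃ c₁ > (0 : ℝ), ∃ c₂ > (0 : ℝ), ∃ N : ℕ, ∀ n : ℕ, N ≤ n →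
      c₁ / n ≤ probNotSynchronizing n ∧ probNotSynchronizing n ≤ c₂ / n := by
  obtain ⟨h, hh, N, hN⟩ := SyncProof.params_exists
  obtain ⟨S, hS, hS0⟩ : ∃ S : ℕ → ℝ, (∀ h, S h =
      (∑ k ∈ Finset.Icc 1 (2 * (h * h) + 6 * h), (4 : ℝ) ^ k * (k : ℝ) ^ (k + 1)) +
        ∑ k ∈ Finset.Icc 1 (2 * h), (k : ℝ) ^ (k + 2)) ∧ ∀ h, 0 ≤ S h :=
    ⟨_, fun _ => rfl, fun h => add_nonneg (Finset.sum_nonneg fun k _ => by positivity)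
      (Finset.sum_nonneg fun k _ => by positivity)⟩
  obtain ⟨C, hC⟩ : ∃ C, C = S h := ⟨_, rfl⟩
  have hC0 : 0 ≤ C := hC ▸ hS0 h
  refine ⟨1 / 18, by norm_num, C + 4, by linarith, max N 18, fun n hn => ?_⟩
  obtain ⟨hn0, T, Δ, m, θ, hm, hθ, hΔ, hρ, g1, g2, g3⟩ := hN n (le_trans (le_max_left _ _) hn)
  have hn18 : 18 ≤ n := le_trans (le_max_right _ _) hn
  have hn' : (0 : ℝ) < n := by exact_mod_cast hn0
  have hpos : (0 : ℝ) < (n : ℝ) ^ (2 * n) := by positivity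
  rw [SyncProof.prob_eq]
  constructor
  · have h1 : _ ≤ SyncProof.nons (Fin n) := SyncProof.cnt_lower (α := Fin n) (by rw [Fintype.card_fin]; exact hn18)
    rw [Fintype.card_fin] at h1
    rw [le_div_iff₀ hpos]
    refine le_trans (le_of_eq ?_) h1
    field_simp
  · have h2 : SyncProof.nons (Fin n) ≤ _ := SyncProof.cnt_nonsync (α := Fin n) h T Δ m θ (by rw [Fintype.card_fin]; exact hn0)
      hh hm hθ hΔ (by rw [Fintype.card_fin]; exact hρ)
    rw [← hS h, Fintype.card_fin, ← hC] at h2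
    rw [div_le_iff₀ hpos]
    refine h2.trans ?_
    refine mul_le_mul_of_nonneg_right ?_ hpos.le
    calc _ ≤ C / n + 1 / n + 1 / n + 2 / n := by gcongr
      _ = (C + 4) / n := by ring
end

section
/- Let f : {1, …, n} → {1, …, n} be chosen uniformly at random, and let Z_n be the number of cycles of its functional graph, i.e. the number of orbits of f restricted to its periodic points. Then the probability that Z_n > 5 ln n is o(1/n⁴); that is, n⁴ · P(Z_n > 5 ln n) → 0 as n → ∞. -/
open scoped Classical in
/-- The number of cycles of the functional graph of `f : Fin n → Fin n`: the number
of orbits of `f` restricted to its periodic points (each periodic point is mapped to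
its orbit `{f^[t] q : t ∈ ℕ}`, and distinct orbits are counted). -/
noncomputable def cycleCount (n : ℕ) (f : Fin n → Fin n) : ℕ :=
  ((Finset.univ.filter fun q : Fin n => ∃ t : ℕ, 1 ≤ t ∧ f^[t] q = q).image
    fun q => Finset.univ.filter fun p : Fin n => ∃ t : ℕ, f^[t] q = p).card

open scoped Classical in
/-- The probability that a uniformly random map `f : {1,…,n} → {1,…,n}` has more
than `5 ln n` cycles in its functional graph. -/
noncomputable def probManyCycles (n : ℕ) : ℝ :=
  ((Finset.univ.filter fun f : Fin n → Fin n =>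
      5 * Real.log n < (cycleCount n f : ℝ)).card : ℝ) /
    (Fintype.card (Fin n → Fin n) : ℝ)

/-- Colourings with five colours that are invariant under `f`: at least `5 ^ cycleCount`. -/
lemma five_pow_cycleCount_le (n : ℕ) (f : Fin n → Fin n) :
    5 ^ cycleCount n f ≤ (Finset.univ.filter fun c : Fin n → Fin 5 =>
      ∀ q, c (f q) = c q).card := by
  classical
  set O : Finset (Finset (Fin n)) :=
    ((Finset.univ.filter fun q : Fin n => ∃ t : ℕ, 1 ≤ t ∧ f^[t] q = q).image
    fun q => Finset.univ.filter fun p : Fin n => ∃ t : ℕ, f^[t] q = p) with hO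
  have hZ : cycleCount n f = O.card := by
    unfold cycleCount
    rw [hO]
  let cyc : Fin n → Finset (Fin n) := fun p =>
    Finset.univ.filter fun q : Fin n => (∃ t : ℕ, 1 ≤ t ∧ f^[t] q = q) ∧ ∃ t : ℕ, f^[t] p = q
  have h1 : ∀ p, cyc (f p) = cyc p := by
    intro p
    ext q
    simp only [cyc, Finset.mem_filter, Finset.mem_univ, true_and]
    refine and_congr_right fun hq => ⟨?_, ?_⟩
    · rintro ⟨t, ht⟩
      exact ⟨t + 1, by rw [Function.iterate_succ_apply]; exact ht⟩
    · rintro ⟨t, ht⟩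
      rcases t with _ | t
      · obtain ⟨s, hs, hs2⟩ := hq
        simp only [Function.iterate_zero, id] at ht
        subst ht
        obtain ⟨r, rfl⟩ : ∃ r, s = r + 1 := ⟨s - 1, by omega⟩
        exact ⟨r, by rw [Function.iterate_succ_apply] at hs2; exact hs2⟩
      · exact ⟨t, by rw [Function.iterate_succ_apply] at ht; exact ht⟩
  have h2 : ∀ o ∈ O, ∃ p, cyc p = o := by
    intro o ho
    rw [hO, Finset.mem_image] at ho
    obtain ⟨q, hq, rfl⟩ := ho
    simp only [Finset.mem_filter, Finset.mem_univ, true_and] at hq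
    obtain ⟨s, hs, hs2⟩ := hq
    refine ⟨q, ?_⟩
    ext p
    simp only [cyc, Finset.mem_filter, Finset.mem_univ, true_and]
    refine ⟨fun h => h.2, fun h => ⟨?_, h⟩⟩
    obtain ⟨t, rfl⟩ := h
    refine ⟨s, hs, ?_⟩
    rw [← Function.iterate_add_apply, Nat.add_comm, Function.iterate_add_apply, hs2]
  have h3 : (Finset.univ : Finset (O → Fin 5)).card = 5 ^ cycleCount n f := by
    rw [hZ]; simp
  rw [← h3]
  refine Finset.card_le_card_of_injOn
    (fun φ p => if h : cyc p ∈ O then φ ⟨cyc p, h⟩ else 0) ?_ ?_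
  · intro φ _
    simp [h1]
  · intro φ _ ψ _ h
    funext ⟨o, ho⟩
    obtain ⟨p, rfl⟩ := h2 o ho
    have := congrFun h p
    simpa [ho] using this

/-- Number of maps preserving a colouring. -/
lemma card_preserving (n : ℕ) (c : Fin n → Fin 5) :
    (Finset.univ.filter fun f : Fin n → Fin n => ∀ q, c (f q) = c q).card
      = ∏ q, (Finset.univ.filter fun p => c p = c q).card := by
  classical
  rw [← Fintype.card_piFinset]
  congr 1
  ext f
  simp [Fintype.mem_piFinset]

lemma sum_colourings (n : ℕ) :
    ∑ c : Fin n → Fin 5, ∏ q, (Finset.univ.filter fun p => c p = c q).card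
      ≤ (n + 1) ^ 4 * n ^ n := by
  classical
  let cnt : (Fin n → Fin 5) → Fin 5 → ℕ := fun c i => (Finset.univ.filter fun p => c p = i).card
  have hle : ∀ c i, cnt c i < n + 1 := fun c i =>
    Nat.lt_succ_of_le ((Finset.card_le_univ _).trans (by simp))
  have hsum : ∀ c, ∑ i, cnt c i = n := by
    intro c
    have := Finset.card_eq_sum_card_fiberwise (f := c) (s := Finset.univ) (t := Finset.univ)
      (by simp)
    simpa [cnt] using this.symm
  let w : (Fin n → Fin 5) → Fin 4 → Fin (n + 1) := fun c i => ⟨cnt c i.succ, hle _ _⟩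
  have hw : ∀ c d, w c = w d → cnt c = cnt d := by
    intro c d h
    have hs : ∀ i : Fin 4, cnt c i.succ = cnt d i.succ := fun i => by
      have := congrFun h i
      simpa [w] using this
    have h0 : cnt c 0 = cnt d 0 := by
      have a := hsum c
      have b := hsum d
      rw [Fin.sum_univ_succ] at a b
      simp only [hs] at a
      omega
    funext i
    refine Fin.cases h0 hs i
  rw [← Finset.sum_fiberwise (s := Finset.univ) (g := w)]
  have hb : ∀ v : Fin 4 → Fin (n + 1), (∑ c with w c = v,
      ∏ q, (Finset.univ.filter fun p => c p = c q).card) ≤ n ^ n := by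
    intro v
    by_cases hv : ∃ d, w d = v
    · obtain ⟨d, rfl⟩ := hv
      calc _ = ∑ c with w c = w d, ∏ q, cnt d (c q) := by
            refine Finset.sum_congr rfl fun c hc => ?_
            rw [← hw c d (Finset.mem_filter.1 hc).2]
        _ ≤ ∑ c : Fin n → Fin 5, ∏ q, cnt d (c q) :=
            Finset.sum_le_sum_of_subset (Finset.filter_subset _ _)
        _ = ∏ q : Fin n, ∑ i, cnt d i := by
            rw [Finset.prod_univ_sum]; simp
        _ = n ^ n := by simp [hsum]
    · rw [Finset.sum_eq_zero]
      · exact Nat.zero_le _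
      · intro c hc
        exact absurd ⟨c, (Finset.mem_filter.1 hc).2⟩ hv
  refine (Finset.sum_le_sum fun v _ => hb v).trans ?_
  simp

lemma sum_five_pow (n : ℕ) :
    ∑ f : Fin n → Fin n, 5 ^ cycleCount n f ≤ (n + 1) ^ 4 * n ^ n := by
  classical
  refine le_trans ?_ (sum_colourings n)
  refine (Finset.sum_le_sum fun f _ => five_pow_cycleCount_le n f).trans ?_
  rw [← Finset.sum_congr rfl fun c _ => card_preserving n c]
  simp only [Finset.card_filter]
  rw [Finset.sum_comm]

lemma probManyCycles_le (n : ℕ) (hn : 1 ≤ n) :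
    probManyCycles n ≤ ((n : ℝ) + 1) ^ 4 * (n : ℝ) ^ (-(5 * Real.log 5)) := by
  classical
  have hn0 : (0 : ℝ) < n := by exact_mod_cast hn
  have hx : (n : ℝ) ^ (5 * Real.log 5) = (5 : ℝ) ^ (5 * Real.log n) := by
    rw [Real.rpow_def_of_pos hn0, Real.rpow_def_of_pos (by norm_num)]
    congr 1; ring
  have hpos : (0 : ℝ) < (n : ℝ) ^ (5 * Real.log 5) := Real.rpow_pos_of_pos hn0 _
  have hS : (∑ f : Fin n → Fin n, (5 : ℝ) ^ cycleCount n f) ≤ ((n : ℝ) + 1) ^ 4 * (n : ℝ) ^ n := by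
    exact_mod_cast sum_five_pow n
  unfold probManyCycles
  rw [Real.rpow_neg hn0.le, ← div_eq_mul_inv, div_le_div_iff₀ (by simp; positivity) hpos]
  have hc : (Fintype.card (Fin n → Fin n) : ℝ) = (n : ℝ) ^ n := by simp
  rw [hc]
  refine le_trans ?_ hS
  rw [← nsmul_eq_mul]
  refine (Finset.card_nsmul_le_sum _ (fun f => (5 : ℝ) ^ cycleCount n f) _ ?_).trans
    (Finset.sum_le_sum_of_subset_of_nonneg (Finset.subset_univ _) fun _ _ _ => by positivity)
  intro f hf
  rw [hx, ← Real.rpow_natCast]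
  exact Real.rpow_le_rpow_of_exponent_le (by norm_num) (Finset.mem_filter.1 hf).2.le

lemma eight_lt : 8 < 5 * Real.log 5 := by
  have h : Real.log ((5 : ℝ) ^ 5) = 5 * Real.log 5 := by
    rw [Real.log_pow]; norm_num
  rw [← h, Real.lt_log_iff_exp_lt (by norm_num)]
  have h8 : Real.exp 8 = Real.exp 1 ^ 8 := by
    rw [← Real.exp_nat_mul]; norm_num
  rw [h8]
  calc Real.exp 1 ^ 8 < (2.7182818286 : ℝ) ^ 8 :=
        pow_lt_pow_left₀ Real.exp_one_lt_d9 (Real.exp_pos _).le (by norm_num)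
    _ < 5 ^ 5 := by norm_num

/-- The functional graph of a uniformly random map on `{1,…,n}` has at most `5 ln n`
cycles with probability `1 − o(1/n⁴)`: that is, `n⁴ · P(Z_n > 5 ln n) → 0`. -/
theorem probManyCycles_little_o :
    Filter.Tendsto (fun n : ℕ => (n : ℝ) ^ 4 * probManyCycles n)
      Filter.atTop (nhds 0) := by
  have hlim : Filter.Tendsto (fun n : ℕ => 16 * (n : ℝ) ^ (-(5 * Real.log 5 - 8)))
      Filter.atTop (nhds 0) := by
    have := ((tendsto_rpow_neg_atTop (sub_pos.2 eight_lt)).comp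
      (tendsto_natCast_atTop_atTop (R := ℝ))).const_mul (16 : ℝ)
    simpa using this
  refine squeeze_zero' (Filter.Eventually.of_forall fun n => ?_) ?_ hlim
  · unfold probManyCycles; positivity
  · filter_upwards [Filter.eventually_ge_atTop 1] with n hn
    have hn1 : (1 : ℝ) ≤ n := by exact_mod_cast hn
    have hn0 : (0 : ℝ) < n := by linarith
    have e : (n : ℝ) ^ (-(5 * Real.log 5 - 8)) = (n : ℝ) ^ 8 * (n : ℝ) ^ (-(5 * Real.log 5)) := by
      rw [← Real.rpow_natCast, ← Real.rpow_add hn0]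
      congr 1; push_cast; ring
    have hp : (0 : ℝ) < (n : ℝ) ^ (-(5 * Real.log 5)) := Real.rpow_pos_of_pos hn0 _
    have h4 : ((n : ℝ) + 1) ^ 4 ≤ (2 * (n : ℝ)) ^ 4 :=
      pow_le_pow_left₀ (by positivity) (by linarith) 4
    calc (n : ℝ) ^ 4 * probManyCycles n
        ≤ (n : ℝ) ^ 4 * ((2 * (n : ℝ)) ^ 4 * (n : ℝ) ^ (-(5 * Real.log 5))) := by
          refine mul_le_mul_of_nonneg_left ((probManyCycles_le n hn).trans ?_) (by positivity)
          exact mul_le_mul_of_nonneg_right h4 hp.le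
      _ = 16 * (n : ℝ) ^ (-(5 * Real.log 5 - 8)) := by rw [e]; ring
end
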